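/- Let c = 2π√(5/12). For every ε > 0 there exists N such that for all positive integers m, n with min(m,n) ≥ N, one has | π(m,n) / [ (5/(2^4·3)) · e^{c√μ}/μ^{3/2} · (1 + e^{−c|n−m|/(2√μ)})^{−1} ] − 1 | < ε, where μ := min(m,n). In other words, uniformly for positive integers m, n, π(m,n) ~ (5/48) · e^{c√μ}/μ^{3/2} · (1 + e^{−c|n−m|/(2√μ)})^{−1} as μ = min(m,n) → ∞. -/

import Mathlib

open Finset

/-- A pair of sequences of parts is *steadily decreasing* if
`min (a i) (b i) ≥ max (a (i+1)) (b (i+1))` for all `i`. -/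
noncomputable def SteadilyDecreasing (a b : ℕ → ℕ) : Prop :=
  ∀ i, max (a (i + 1)) (b (i + 1)) ≤ min (a i) (b i)

/-- `bipartitePi m n` is the number of pairs of partitions (given as non-increasing,
finitely supported sequences) of the bipartite number `(m, n)` with steadily
decreasing parts. -/
noncomputable def bipartitePi (m n : ℕ) : ℕ :=
  Nat.card {p : (ℕ →₀ ℕ) × (ℕ →₀ ℕ) //
    (∀ i, p.1 (i + 1) ≤ p.1 i) ∧ (∀ i, p.2 (i + 1) ≤ p.2 i) ∧
    SteadilyDecreasing p.1 p.2 ∧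
    (p.1.sum fun _ x => x) = m ∧ (p.2.sum fun _ x => x) = n}

/-- The partition function `p n`. -/
noncomputable def partitionCount (n : ℕ) : ℕ := Nat.card (Nat.Partition n)

/-- The partition function extended to the integers, with `p r = 0` for `r < 0`. -/
noncomputable def partitionCountInt (r : ℤ) : ℕ := if 0 ≤ r then partitionCount r.toNat else 0

/-- The cubic partition function `c n`, counting partitions of `n` in which even
parts come in two colors (equivalently, pairs of a partition together with a
partition into even parts, of total size `n`). -/
noncomputable def cubicPartition (n : ℕ) : ℕ :=
  Nat.card {p : Multiset ℕ × Multiset ℕ //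
    (∀ i ∈ p.1, 0 < i) ∧ (∀ i ∈ p.2, 0 < i ∧ Even i) ∧ p.1.sum + p.2.sum = n}

/-- The Andrews–Garvan crank of a partition: the largest part if there are no ones,
and otherwise the number of parts larger than the number of ones minus the number of
ones. -/
noncomputable def crank {n : ℕ} (l : n.Partition) : ℤ :=
  if l.parts.count 1 = 0 then (l.parts.sup : ℤ)
  else ((l.parts.filter fun p => l.parts.count 1 < p).card : ℤ) - l.parts.count 1

/-- `crankM m n` is the crank counting function `M(m, n)`: the number of partitions
of `n` with crank `m`, with the standard convention at `n = 1`
(`M(0,1) = -1`, `M(±1,1) = 1`, `M(m,1) = 0` otherwise). -/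
noncomputable def crankM (m : ℤ) (n : ℕ) : ℤ :=
  if n = 1 then (if m = 0 then -1 else if m.natAbs = 1 then 1 else 0)
  else (Nat.card {l : n.Partition // crank l = m} : ℤ)

/-- `alphaBip s k = Σ_{ℓ ≥ 0} (-1)^ℓ p(k - ℓ(ℓ+1)/2 - ℓ s)`. -/
noncomputable def alphaBip (s k : ℕ) : ℤ :=
  ∑' ℓ : ℕ, (-1 : ℤ) ^ ℓ *
    (partitionCountInt ((k : ℤ) - ℓ * (ℓ + 1) / 2 - ℓ * s) : ℤ)

/-- `Dbip m n = π(m,n) - π(m-1,n)`, with `π(-1,n) := 0`. -/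
noncomputable def Dbip (m n : ℕ) : ℤ :=
  (bipartitePi m n : ℤ) - if m = 0 then 0 else (bipartitePi (m - 1) n : ℤ)

/-!
A pair `(α, β)` with steadily decreasing parts is determined by the differences `α_i - β_i` and the
gaps `min α_i β_i - max α_{i+1} β_{i+1}`. Together with one free sequence these become three free
sequences, which expresses `P_k = ∑ n, π(n + k, n) q ^ n` as a series that telescopes in
`P_k + q ^ (k + 1) * P_{k + 1} = 1 / (φ(q) ^ 2 * φ(q ^ 2))`, where `φ` is Euler's function. The
right side does not depend on `k`, so its coefficients `s(n)` satisfy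
`π(n + k, n) + π(n, n - k - 1) = s(n)` for all `k < n`.

The saddle point method gives `s(n) ∼ (5 / 48) * exp (c √n) / n ^ (3 / 2)`; near the saddle point
the integrand is controlled by the transformation law of the eta function, elsewhere by comparing
`φ(q)` with `φ(|q|)` factor by factor.

If `k / √n → x`, then `s(n - k - 1) / s(n) → r = exp (-c x / 2)`, and the recurrence says that
`y = lim π(n + k, n) / s(n)` solves `y = 1 - r y`, that is `y = 1 / (1 + r)`.
-/

section Tail

variable (s : ℕ →₀ ℕ)

/-- The shifted sequence `s 1, s 2, …`. -/
noncomputable def finsuppTail : ℕ →₀ ℕ :=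
  s.comapDomain Nat.succ Nat.succ_injective.injOn

@[simp]
lemma finsuppTail_apply (i : ℕ) : finsuppTail s i = s (i + 1) := rfl

lemma single_zero_add_embDomain_finsuppTail :
    Finsupp.single 0 (s 0) + (finsuppTail s).embDomain ⟨Nat.succ, Nat.succ_injective⟩ = s := by
  ext i
  cases i with
  | zero =>
    rw [Finsupp.add_apply, Finsupp.single_eq_same,
      Finsupp.embDomain_of_notMem_range _ _ _ (by simp), add_zero]
  | succ i =>
    rw [Finsupp.add_apply, Finsupp.single_eq_of_ne (by simp), zero_add]
    exact Finsupp.embDomain_apply_self ⟨Nat.succ, Nat.succ_injective⟩ (finsuppTail s) i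

lemma finsuppTail_single_zero_add_embDomain (x : ℕ) :
    finsuppTail (Finsupp.single 0 x + s.embDomain ⟨Nat.succ, Nat.succ_injective⟩) = s := by
  ext i
  rw [finsuppTail_apply, Finsupp.add_apply, Finsupp.single_eq_of_ne (by simp), zero_add]
  exact Finsupp.embDomain_apply_self ⟨Nat.succ, Nat.succ_injective⟩ s i

/-- A finitely supported sequence corresponds to its first entry and its tail. -/
noncomputable def headTailEquiv : (ℕ →₀ ℕ) ≃ ℕ × (ℕ →₀ ℕ) where
  toFun s := (s 0, finsuppTail s)
  invFun p := Finsupp.single 0 p.1 + p.2.embDomain ⟨Nat.succ, Nat.succ_injective⟩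
  left_inv := single_zero_add_embDomain_finsuppTail
  right_inv p := by
    refine Prod.ext ?_ (finsuppTail_single_zero_add_embDomain p.2 p.1)
    simp [Finsupp.embDomain_of_notMem_range]

lemma weight_eq_head_add_weight_finsuppTail (w : ℕ → ℕ) :
    Finsupp.weight w s = s 0 * w 0 + Finsupp.weight (fun j ↦ w (j + 1)) (finsuppTail s) := by
  conv_lhs => rw [← single_zero_add_embDomain_finsuppTail s]
  rw [map_add, Finsupp.weight_single, smul_eq_mul, Finsupp.weight_apply,
    Finsupp.sum_embDomain, Finsupp.weight_apply]
  rfl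

lemma finsuppTail_headTailEquiv_symm (x : ℕ) : finsuppTail (headTailEquiv.symm (x, s)) = s :=
  congrArg Prod.snd (headTailEquiv.apply_symm_apply (x, s))

lemma weight_headTailEquiv_symm (w : ℕ → ℕ) (x : ℕ) :
    Finsupp.weight w (headTailEquiv.symm (x, s)) =
      x * w 0 + Finsupp.weight (fun j ↦ w (j + 1)) s := by
  have hx : headTailEquiv.symm (x, s) 0 = x :=
    congrArg Prod.fst (headTailEquiv.apply_symm_apply (x, s))
  rw [weight_eq_head_add_weight_finsuppTail, hx, finsuppTail_headTailEquiv_symm]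

lemma weight_id_eq_weight_succ_finsuppTail :
    Finsupp.weight (fun j ↦ j) s = Finsupp.weight (fun j ↦ j + 1) (finsuppTail s) := by
  simp [weight_eq_head_add_weight_finsuppTail s]

lemma weight_add_weight (v w : ℕ → ℕ) :
    Finsupp.weight v s + Finsupp.weight w s = Finsupp.weight (fun j ↦ v j + w j) s := by
  simp [Finsupp.weight_apply, Finsupp.sum, sum_add_distrib, mul_add]

lemma weight_succ_eq_weight_id_add_degree :
    Finsupp.weight (fun j ↦ j + 1) s = Finsupp.weight (fun j ↦ j) s + s.degree := by
  rw [Finsupp.degree_eq_weight_one (R := ℕ), weight_add_weight]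

lemma eventually_apply_eq_zero : ∀ᶠ i in Filter.atTop, s i = 0 := by
  rw [← Nat.cofinite_eq_atTop, Filter.eventually_cofinite]
  exact s.hasFiniteSupport

end Tail

lemma forall_of_eventually_of_succ_imp {P : ℕ → Prop} (hP : ∀ᶠ i in Filter.atTop, P i)
    (hstep : ∀ i, P (i + 1) → P i) (i : ℕ) : P i := by
  obtain ⟨N, hN⟩ := Filter.eventually_atTop.1 hP
  rcases le_total N i with h | h
  · exact hN i h
  · exact Nat.decreasingInduction' (fun k _ _ ↦ hstep k) h (hN N le_rfl)

lemma exists_finsupp_eq_add_succ (f : ℕ →₀ ℕ) :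
    ∃ M : ℕ →₀ ℕ, ∀ i, M i = f i + M (i + 1) := by
  obtain ⟨N, hN⟩ := Filter.eventually_atTop.1 (eventually_apply_eq_zero f)
  refine ⟨Finsupp.onFinset (range N) (fun i ↦ ∑ j ∈ Ico i N, f j) fun i hi ↦ ?_, fun i ↦ ?_⟩
  · by_contra hiN
    exact hi (by rw [Ico_eq_empty_of_le (by simpa using hiN), sum_empty])
  · rcases lt_or_ge i N with hi | hi
    · exact sum_eq_sum_Ico_succ_bot hi f
    · simp [Ico_eq_empty_of_le hi, Ico_eq_empty_of_le (hi.trans i.le_succ), hN i hi]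

/-- Pairs of finitely supported sequences with steadily decreasing parts. -/
abbrev SteadyPair : Type := {p : (ℕ →₀ ℕ) × (ℕ →₀ ℕ) // SteadilyDecreasing p.1 p.2}

namespace SteadyPair

/-- The gaps `min (a i) (b i) - max (a (i + 1)) (b (i + 1))` of a pair `(a, b)`. -/
noncomputable def gaps (p : SteadyPair) : ℕ →₀ ℕ :=
  p.1.1 ⊓ p.1.2 - finsuppTail (p.1.1 ⊔ p.1.2)

lemma gaps_apply (p : SteadyPair) (i : ℕ) :
    p.gaps i = min (p.1.1 i) (p.1.2 i) - max (p.1.1 (i + 1)) (p.1.2 (i + 1)) := rfl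

lemma gaps_add_finsuppTail_sup (p : SteadyPair) :
    p.gaps + finsuppTail (p.1.1 ⊔ p.1.2) = p.1.1 ⊓ p.1.2 :=
  tsub_add_cancel_of_le p.2

/-- A pair with steadily decreasing parts and a free sequence `s` become three free sequences: the
gaps of the pair, and a pair whose truncated differences are those of `(a, b)` and whose minimum is
`s`. -/
noncomputable def unfold (x : SteadyPair × (ℕ →₀ ℕ)) : (ℕ →₀ ℕ) × (ℕ →₀ ℕ) × (ℕ →₀ ℕ) :=
  (x.1.gaps, x.1.1.1 - x.1.1.2 + x.2, x.1.1.2 - x.1.1.1 + x.2)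

lemma unfold_injective : Function.Injective unfold := by
  rintro ⟨⟨⟨a, b⟩, hab⟩, s⟩ ⟨⟨⟨a', b'⟩, hab'⟩, s'⟩ heq
  obtain ⟨hgaps, hleft, hright⟩ : _ ∧ _ ∧ _ := by simpa only [unfold, Prod.mk.injEq] using heq
  replace hgaps := DFunLike.congr_fun hgaps
  replace hleft (i) : a i - b i + s i = a' i - b' i + s' i := DFunLike.congr_fun hleft i
  replace hright (i) : b i - a i + s i = b' i - a' i + s' i := DFunLike.congr_fun hright i
  simp only [gaps_apply] at hgaps
  have hpair (i) : a i = a' i ∧ b i = b' i := by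
    refine forall_of_eventually_of_succ_imp (P := fun i ↦ a i = a' i ∧ b i = b' i) ?_ ?_ i
    · filter_upwards [eventually_apply_eq_zero a, eventually_apply_eq_zero b,
        eventually_apply_eq_zero a', eventually_apply_eq_zero b'] with i h₁ h₂ h₃ h₄
      simp [h₁, h₂, h₃, h₄]
    · intro i hi
      have := hgaps i
      have := hleft i
      have := hright i
      have := hab i
      have := hab' i
      lia
  obtain rfl : a = a' := Finsupp.ext fun i ↦ (hpair i).1
  obtain rfl : b = b' := Finsupp.ext fun i ↦ (hpair i).2
  obtain rfl : s = s' := Finsupp.ext fun i ↦ Nat.add_left_cancel (hleft i)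
  rfl

lemma unfold_surjective : Function.Surjective unfold := by
  rintro ⟨d, F, G⟩
  obtain ⟨M, hM⟩ := exists_finsupp_eq_add_succ (d + (F - G) + (G - F))
  simp only [Finsupp.add_apply, Finsupp.tsub_apply] at hM
  have hdecr : SteadilyDecreasing (M - (G - F)) (M - (F - G)) := by
    intro i
    have := hM i
    have := hM (i + 1)
    simp only [Pi.sub_apply]
    lia
  refine ⟨(⟨(M - (G - F), M - (F - G)), hdecr⟩, F ⊓ G), ?_⟩
  refine Prod.ext ?_ (Prod.ext ?_ ?_) <;> ext i <;> have := hM i <;> have := hM (i + 1) <;>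
    simp only [unfold, gaps_apply, Finsupp.add_apply, Finsupp.tsub_apply, Finsupp.inf_apply] <;> lia

/-- `SteadyPair.unfold` as an equivalence. -/
noncomputable def unfoldEquiv :
    SteadyPair × (ℕ →₀ ℕ) ≃ (ℕ →₀ ℕ) × (ℕ →₀ ℕ) × (ℕ →₀ ℕ) :=
  Equiv.ofBijective unfold ⟨unfold_injective, unfold_surjective⟩

lemma unfoldEquiv_apply (x : SteadyPair × (ℕ →₀ ℕ)) : unfoldEquiv x = unfold x := rfl

lemma weight_unfold (x : SteadyPair × (ℕ →₀ ℕ)) :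
    Finsupp.weight (fun j ↦ j + 1) (unfold x).1 + Finsupp.weight (fun j ↦ j) (unfold x).2.1 +
        Finsupp.weight (fun j ↦ j + 1) (unfold x).2.2 =
      x.1.1.2.degree + Finsupp.weight (fun j ↦ 2 * j + 1) x.2 := by
  obtain ⟨⟨⟨a, b⟩, hab⟩, s⟩ := x
  have hsup : a ⊔ b = a ⊓ b + (a - b) + (b - a) := by
    ext i
    simp only [Finsupp.sup_apply, Finsupp.inf_apply, Finsupp.add_apply, Finsupp.tsub_apply]
    lia
  have hb : b = a ⊓ b + (b - a) := by
    ext i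
    simp only [Finsupp.inf_apply, Finsupp.add_apply, Finsupp.tsub_apply]
    lia
  have hgaps := congrArg (Finsupp.weight fun j ↦ j + 1)
    (gaps_add_finsuppTail_sup ⟨(a, b), hab⟩)
  rw [map_add, ← weight_id_eq_weight_succ_finsuppTail, hsup, map_add, map_add,
    weight_succ_eq_weight_id_add_degree (a ⊓ b)] at hgaps
  have hs := weight_add_weight s (fun j ↦ j) fun j ↦ j + 1
  simp only [← add_assoc, ← two_mul] at hs
  have hb_degree := congrArg Finsupp.degree hb
  simp only [unfold, map_add, ← hs] at hb_degree ⊢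
  rw [weight_succ_eq_weight_id_add_degree (b - a)]
  lia

lemma degree_unfold (x : SteadyPair × (ℕ →₀ ℕ)) :
    (unfold x).2.1.degree + x.1.1.2.degree = (unfold x).2.2.degree + x.1.1.1.degree := by
  simp only [← map_add, unfold]
  congr 1
  ext i
  simp only [Finsupp.add_apply, Finsupp.tsub_apply]
  lia

end SteadyPair

section GeneratingFunctions

open ENNReal Filter Topology

lemma tendsto_tsum_ite {α ι : Type*} {l : Filter ι} {P : ι → α → Prop}
    [∀ i, DecidablePred (P i)] (f : α → ℝ≥0∞) (hP : ∀ x, ∀ᶠ i in l, P i x) :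
    Tendsto (fun i ↦ ∑' x, if P i x then f x else 0) l (𝓝 (∑' x, f x)) := by
  refine tendsto_order.2 ⟨fun c hc ↦ ?_, fun c hc ↦ Eventually.of_forall fun i ↦ ?_⟩
  · rw [ENNReal.tsum_eq_iSup_sum] at hc
    obtain ⟨S, hS⟩ := lt_iSup_iff.1 hc
    filter_upwards [(Finset.eventually_all S).2 fun x _ ↦ hP x] with i hi
    refine hS.trans_le (le_trans (le_of_eq ?_) (ENNReal.sum_le_tsum S))
    exact sum_congr rfl fun x hx ↦ (if_pos (hi x hx)).symm
  · refine (ENNReal.tsum_le_tsum fun x ↦ ?_).trans_lt hc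
    split_ifs
    exacts [le_rfl, zero_le]

/-- The generating function `∑ q ^ |s|` over finitely supported sequences `s`, where
`|s| = ∑ w j * s j`; that is, over partitions with parts taken from the values of `w`. -/
noncomputable def weightGF (w : ℕ → ℕ) (q : ℝ≥0∞) : ℝ≥0∞ :=
  ∑' s : ℕ →₀ ℕ, q ^ Finsupp.weight w s

lemma support_subset_range_succ_iff (s : ℕ →₀ ℕ) (N : ℕ) :
    s.support ⊆ range (N + 1) ↔ (finsuppTail s).support ⊆ range N := by
  simp only [Finset.subset_iff, Finsupp.mem_support_iff, mem_range, finsuppTail_apply]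
  refine ⟨fun h i hi ↦ Nat.lt_of_succ_lt_succ (h hi), fun h i hi ↦ ?_⟩
  cases i with
  | zero => exact N.succ_pos
  | succ i => exact Nat.succ_lt_succ (h hi)

lemma tsum_ite_support_subset_range (q : ℝ≥0∞) (N : ℕ) (w : ℕ → ℕ) :
    ∑' s : ℕ →₀ ℕ, (if s.support ⊆ range N then q ^ Finsupp.weight w s else 0) =
      ∏ j ∈ range N, (1 - q ^ w j)⁻¹ := by
  induction N generalizing w with
  | zero => simp [Finsupp.support_eq_empty]
  | succ N ih =>
    rw [prod_range_succ', ← ih, mul_comm, ← ENNReal.tsum_geometric, ← ENNReal.tsum_mul_right,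
      ← headTailEquiv.symm.tsum_eq, ENNReal.tsum_prod']
    refine tsum_congr fun x ↦ ?_
    rw [← ENNReal.tsum_mul_left]
    refine tsum_congr fun t ↦ ?_
    simp only [support_subset_range_succ_iff, finsuppTail_headTailEquiv_symm,
      weight_headTailEquiv_symm, mul_ite, mul_zero, ← pow_mul', pow_add]

lemma tendsto_prod_weightGF (w : ℕ → ℕ) (q : ℝ≥0∞) :
    Tendsto (fun N ↦ ∏ j ∈ range N, (1 - q ^ w j)⁻¹) atTop (𝓝 (weightGF w q)) := by
  simp_rw [← tsum_ite_support_subset_range]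
  refine tendsto_tsum_ite _ fun s ↦ ?_
  filter_upwards [eventually_gt_atTop (s.support.sup id)] with N hN j hj
  exact mem_range.2 ((Finset.le_sup (f := id) hj).trans_lt hN)

lemma one_le_weightGF (w : ℕ → ℕ) (q : ℝ≥0∞) : 1 ≤ weightGF w q :=
  (by simp : 1 ≤ q ^ Finsupp.weight w 0).trans (ENNReal.le_tsum 0)

lemma weightGF_mul_left (c : ℕ) (w : ℕ → ℕ) (q : ℝ≥0∞) :
    weightGF (fun j ↦ c * w j) q = weightGF w (q ^ c) := by
  refine tsum_congr fun s ↦ ?_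
  rw [← pow_mul]
  congr 1
  simp [Finsupp.weight_apply, Finsupp.sum, mul_sum, mul_left_comm]

lemma weightGF_eq_mul_of_alternating (w : ℕ → ℕ) (q : ℝ≥0∞) :
    weightGF w q = weightGF (fun j ↦ w (2 * j)) q * weightGF (fun j ↦ w (2 * j + 1)) q := by
  have hmul := ENNReal.Tendsto.mul (tendsto_prod_weightGF (fun j ↦ w (2 * j)) q)
    (Or.inl (one_pos.trans_le (one_le_weightGF _ q)).ne')
    (tendsto_prod_weightGF (fun j ↦ w (2 * j + 1)) q)
    (Or.inl (one_pos.trans_le (one_le_weightGF _ q)).ne')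
  refine tendsto_nhds_unique
    ((tendsto_prod_weightGF w q).comp (tendsto_id.const_mul_atTop' two_pos)) (hmul.congr fun N ↦ ?_)
  induction N with
  | zero => simp
  | succ N ih =>
    simp only [Function.comp_apply, id] at ih ⊢
    rw [show 2 * (N + 1) = 2 * N + 1 + 1 by ring, prod_range_succ _ N, prod_range_succ _ N,
      prod_range_succ _ (2 * N + 1), prod_range_succ _ (2 * N), ← ih]
    ring

/-- The generating function of partitions into at most `b` parts: `s j` is the multiplicity of the
part `j + 1`. -/
noncomputable def partsLeGF (q : ℝ≥0∞) (b : ℕ) : ℝ≥0∞ :=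
  ∑' s : ℕ →₀ ℕ, if s.degree ≤ b then q ^ Finsupp.weight (fun j ↦ j + 1) s else 0

lemma tendsto_partsLeGF (q : ℝ≥0∞) :
    Tendsto (partsLeGF q) atTop (𝓝 (weightGF (fun j ↦ j + 1) q)) :=
  tendsto_tsum_ite _ fun s ↦ eventually_ge_atTop s.degree

lemma partsLeGF_zero (q : ℝ≥0∞) : partsLeGF q 0 = 1 := by
  simp [partsLeGF, Finsupp.degree_eq_zero_iff]

-- Allowing the part `0` turns "at most `b` parts" into "exactly `b` parts".
lemma tsum_ite_degree_eq (q : ℝ≥0∞) (b : ℕ) :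
    ∑' s : ℕ →₀ ℕ, (if s.degree = b then q ^ Finsupp.weight (fun j ↦ j) s else 0) =
      partsLeGF q b := by
  rw [← headTailEquiv.symm.tsum_eq, ENNReal.tsum_prod', ENNReal.tsum_comm, partsLeGF]
  refine tsum_congr fun t ↦ ?_
  have hdegree (x : ℕ) : (headTailEquiv.symm (x, t)).degree = x + t.degree := by
    simp [Finsupp.degree_eq_weight_one, weight_headTailEquiv_symm]
  have hweight (x : ℕ) : Finsupp.weight (fun j ↦ j) (headTailEquiv.symm (x, t)) =
      Finsupp.weight (fun j ↦ j + 1) t := by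
    simp [weight_headTailEquiv_symm]
  simp only [hdegree, hweight]
  split_ifs with hb
  · rw [tsum_eq_single (b - t.degree) fun x hx ↦ if_neg (by lia), if_pos (by lia)]
  · exact ENNReal.tsum_eq_zero.2 fun x ↦ if_neg (by lia)

lemma partsLeGF_succ (q : ℝ≥0∞) (b : ℕ) :
    partsLeGF q (b + 1) = partsLeGF q b + q ^ (b + 1) * partsLeGF q (b + 1) := by
  nth_rw 3 [← tsum_ite_degree_eq]
  rw [partsLeGF, partsLeGF, ← ENNReal.tsum_mul_left, ← ENNReal.tsum_add]
  refine tsum_congr fun s ↦ ?_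
  rcases lt_trichotomy s.degree (b + 1) with h | h | h
  · simp [Nat.lt_succ_iff.1 h, h.le, h.ne]
  · simp [h, weight_succ_eq_weight_id_add_degree, pow_add, mul_comm]
  · simp [h.not_ge, (b.lt_succ_self.trans h).not_ge, h.ne']

lemma sum_partsLeGF_mul (q : ℝ≥0∞) (k N : ℕ) :
    ∑ b ∈ range (N + 1), (q ^ b * partsLeGF q b * partsLeGF q (b + k) +
        q ^ (k + 1) * (q ^ b * partsLeGF q b * partsLeGF q (b + (k + 1)))) =
      partsLeGF q N * partsLeGF q (N + (k + 1)) := by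
  induction N with
  | zero =>
    simp only [zero_add, range_one, sum_singleton, pow_zero, partsLeGF_zero, one_mul]
    exact (partsLeGF_succ q k).symm
  | succ N ih =>
    rw [sum_range_succ, ih, show N + (k + 1) = N + 1 + k by ring]
    calc _ = (partsLeGF q N + q ^ (N + 1) * partsLeGF q (N + 1)) * partsLeGF q (N + 1 + k) +
          q ^ (N + 1 + k + 1) * partsLeGF q (N + 1) * partsLeGF q (N + 1 + k + 1) := by ring_nf
      _ = partsLeGF q (N + 1) * (partsLeGF q (N + 1 + k) +
          q ^ (N + 1 + k + 1) * partsLeGF q (N + 1 + k + 1)) := by rw [← partsLeGF_succ]; ring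
      _ = _ := by rw [← partsLeGF_succ]; rfl

/-- `partsLePairGF q k = ∑ b, q ^ b * p_b(q) * p_{b+k}(q)`, with `p_b` the generating function of
partitions into at most `b` parts. -/
noncomputable def partsLePairGF (q : ℝ≥0∞) (k : ℕ) : ℝ≥0∞ :=
  ∑' b, q ^ b * partsLeGF q b * partsLeGF q (b + k)

lemma partsLePairGF_add_pow_mul (q : ℝ≥0∞) (k : ℕ) :
    partsLePairGF q k + q ^ (k + 1) * partsLePairGF q (k + 1) =
      weightGF (fun j ↦ j + 1) q ^ 2 := by
  rw [partsLePairGF, partsLePairGF, ← ENNReal.tsum_mul_left, ← ENNReal.tsum_add, sq]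
  refine tendsto_nhds_unique ((ENNReal.tendsto_nat_tsum _).comp (tendsto_add_atTop_nat 1)) ?_
  refine Tendsto.congr (fun N ↦ (sum_partsLeGF_mul q k N).symm) ?_
  have hne := (one_pos.trans_le (one_le_weightGF (fun j ↦ j + 1) q)).ne'
  exact ENNReal.Tendsto.mul (tendsto_partsLeGF q) (.inl hne)
    ((tendsto_partsLeGF q).comp (tendsto_add_atTop_nat (k + 1))) (.inl hne)

lemma tsum_pair_eq_partsLePairGF (q : ℝ≥0∞) (k : ℕ) :
    ∑' z : (ℕ →₀ ℕ) × (ℕ →₀ ℕ), (if z.1.degree = z.2.degree + k then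
        q ^ (Finsupp.weight (fun j ↦ j) z.1 + Finsupp.weight (fun j ↦ j + 1) z.2) else 0) =
      partsLePairGF q k := by
  have hinner (G : ℕ →₀ ℕ) : ∑' F : ℕ →₀ ℕ, (if F.degree = G.degree + k then
        q ^ (Finsupp.weight (fun j ↦ j) F + Finsupp.weight (fun j ↦ j + 1) G) else 0) =
      ∑' b, if G.degree = b then
        q ^ b * q ^ Finsupp.weight (fun j ↦ j) G * partsLeGF q (b + k) else 0 := by
    rw [tsum_eq_single G.degree fun b hb ↦ if_neg hb.symm, if_pos rfl, ← tsum_ite_degree_eq,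
      ← ENNReal.tsum_mul_left]
    refine tsum_congr fun F ↦ ?_
    rw [mul_ite, mul_zero, weight_succ_eq_weight_id_add_degree, pow_add, pow_add]
    congr 1
    ring
  rw [ENNReal.tsum_prod', ENNReal.tsum_comm]
  simp only [hinner]
  rw [ENNReal.tsum_comm, partsLePairGF]
  refine tsum_congr fun b ↦ ?_
  rw [← tsum_ite_degree_eq q b, ← ENNReal.tsum_mul_left, ← ENNReal.tsum_mul_right]
  refine tsum_congr fun G ↦ ?_
  split_ifs <;> simp

namespace SteadyPair

/-- The generating function of pairs with steadily decreasing parts whose sums differ by `k`. -/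
noncomputable def diffGF (k : ℕ) (q : ℝ≥0∞) : ℝ≥0∞ :=
  ∑' p : SteadyPair, if p.1.1.degree = p.1.2.degree + k then q ^ p.1.2.degree else 0

lemma diffGF_mul_weightGF_odd (k : ℕ) (q : ℝ≥0∞) :
    diffGF k q * weightGF (fun j ↦ 2 * j + 1) q =
      weightGF (fun j ↦ j + 1) q * partsLePairGF q k := by
  rw [diffGF, weightGF, ← ENNReal.tsum_mul_right, weightGF, ← ENNReal.tsum_mul_right,
    ← tsum_pair_eq_partsLePairGF]
  simp_rw [← ENNReal.tsum_mul_left]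
  rw [← ENNReal.tsum_prod, ← ENNReal.tsum_prod, ← unfoldEquiv.tsum_eq]
  refine tsum_congr fun x ↦ ?_
  have hdegree : (unfold x).2.1.degree = (unfold x).2.2.degree + k ↔
      x.1.1.1.degree = x.1.1.2.degree + k := by
    have := degree_unfold x
    lia
  have hweight := weight_unfold x
  rw [unfoldEquiv_apply]
  simp only [hdegree, ite_mul, mul_ite, zero_mul, mul_zero, ← pow_add, ← hweight, add_assoc]

lemma diffGF_add_mul_weightGF_odd (k : ℕ) (q : ℝ≥0∞) :
    (diffGF k q + q ^ (k + 1) * diffGF (k + 1) q) * weightGF (fun j ↦ 2 * j + 1) q =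
      weightGF (fun j ↦ j + 1) q ^ 3 := by
  rw [add_mul, mul_assoc, diffGF_mul_weightGF_odd, diffGF_mul_weightGF_odd, mul_left_comm,
    ← mul_add, partsLePairGF_add_pow_mul, ← pow_succ']

lemma diffGF_add {q : ℝ≥0∞} (hq : weightGF (fun j ↦ j + 1) q ≠ ∞) (k : ℕ) :
    diffGF k q + q ^ (k + 1) * diffGF (k + 1) q =
      weightGF (fun j ↦ j + 1) q ^ 2 * weightGF (fun j ↦ j + 1) (q ^ 2) := by
  have hsplit := weightGF_eq_mul_of_alternating (fun j ↦ j + 1) q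
  have heven : weightGF (fun j ↦ 2 * j + 1 + 1) q = weightGF (fun j ↦ j + 1) (q ^ 2) :=
    weightGF_mul_left 2 (fun j ↦ j + 1) q
  rw [heven] at hsplit
  have hodd_ne_zero := (one_pos.trans_le (one_le_weightGF (fun j ↦ 2 * j + 1) q)).ne'
  have hodd_ne_top : weightGF (fun j ↦ 2 * j + 1) q ≠ ∞ :=
    ne_top_of_le_ne_top hq (hsplit ▸ le_mul_of_one_le_right' (one_le_weightGF _ _))
  rw [← ENNReal.mul_left_inj hodd_ne_zero hodd_ne_top, diffGF_add_mul_weightGF_odd, pow_succ]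
  nth_rw 2 [hsplit]
  ring

end SteadyPair

end GeneratingFunctions

lemma support_subset_range_degree {s : ℕ →₀ ℕ} (hs : Antitone s) :
    s.support ⊆ range s.degree := by
  intro i hi
  have hrange : range (i + 1) ⊆ s.support := fun j hj ↦ by
    have hle : s i ≤ s j := hs (Nat.lt_succ_iff.1 (mem_range.1 hj))
    rw [Finsupp.mem_support_iff] at hi ⊢
    lia
  have hcard : #s.support ≤ s.degree := by
    simpa [Finsupp.degree_apply] using s.support.card_nsmul_le_sum s 1 fun j hj ↦
      Nat.one_le_iff_ne_zero.2 (Finsupp.mem_support_iff.1 hj)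
  simpa using (card_le_card hrange).trans hcard

lemma mem_finsuppAntidiag_degree {s : ℕ →₀ ℕ} (hs : Antitone s) :
    s ∈ finsuppAntidiag (range s.degree) s.degree :=
  mem_finsuppAntidiag.2 ⟨(sum_subset (support_subset_range_degree hs) fun _ _ hi ↦
    Finsupp.notMem_support_iff.1 hi).symm, support_subset_range_degree hs⟩

namespace SteadilyDecreasing

variable {a b : ℕ → ℕ}

lemma antitone_left (h : SteadilyDecreasing a b) : Antitone a :=
  antitone_nat_of_succ_le fun i ↦ by have := h i; lia

lemma symm (h : SteadilyDecreasing a b) : SteadilyDecreasing b a := fun i ↦ by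
  rw [max_comm, min_comm]
  exact h i

lemma antitone_right (h : SteadilyDecreasing a b) : Antitone b := h.symm.antitone_left

end SteadilyDecreasing

namespace SteadyPair

/-- The pairs with steadily decreasing parts whose sums are `m` and `n`. -/
def withSums (m n : ℕ) : Set SteadyPair :=
  {p | p.1.1.degree = m ∧ p.1.2.degree = n}

lemma finite_withSums (m n : ℕ) : (withSums m n).Finite := by
  refine ((finsuppAntidiag (range m) m ×ˢ finsuppAntidiag (range n) n).finite_toSet.preimage
    Subtype.val_injective.injOn).subset ?_
  rintro p ⟨rfl, rfl⟩
  exact mem_coe.2 (mem_product.2 ⟨mem_finsuppAntidiag_degree p.2.antitone_left,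
    mem_finsuppAntidiag_degree p.2.antitone_right⟩)

end SteadyPair

open SteadyPair

lemma bipartitePi_eq_ncard_withSums (m n : ℕ) : bipartitePi m n = (withSums m n).ncard := by
  rw [bipartitePi, ← Nat.card_coe_set_eq]
  exact Nat.card_congr
    { toFun := fun p ↦ ⟨⟨p.1, p.2.2.2.1⟩, p.2.2.2.2⟩
      invFun := fun p ↦ ⟨p.1.1, fun i ↦ p.1.2.antitone_left i.le_succ,
        fun i ↦ p.1.2.antitone_right i.le_succ, p.1.2, p.2⟩ }

lemma bipartitePi_comm (m n : ℕ) : bipartitePi m n = bipartitePi n m := by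
  rw [bipartitePi_eq_ncard_withSums, bipartitePi_eq_ncard_withSums]
  refine Set.ncard_congr (fun p _ ↦ ⟨p.1.swap, p.2.symm⟩) (fun p hp ↦ hp.symm) ?_ ?_
  · rintro ⟨p, _⟩ ⟨p', _⟩ _ _ h
    exact Subtype.ext (Prod.swap_injective (congrArg Subtype.val h))
  · exact fun p hp ↦ ⟨⟨p.1.swap, p.2.symm⟩, hp.symm, rfl⟩

lemma bipartitePi_le_bipartitePi_add_left (m n j : ℕ) :
    bipartitePi m n ≤ bipartitePi (m + j) n := by
  rw [bipartitePi_eq_ncard_withSums, bipartitePi_eq_ncard_withSums]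
  have hraise (p : SteadyPair) :
      SteadilyDecreasing (p.1.1 + Finsupp.single 0 j : ℕ →₀ ℕ) p.1.2 := by
    intro i
    have := p.2 i
    simp only [Finsupp.add_apply, Finsupp.single_eq_of_ne (show i + 1 ≠ 0 by simp)]
    lia
  refine Set.ncard_le_ncard_of_injOn (fun p ↦ ⟨(p.1.1 + Finsupp.single 0 j, p.1.2), hraise p⟩)
    ?_ ?_ (finite_withSums _ _)
  · rintro p ⟨rfl, rfl⟩
    exact ⟨by simp, rfl⟩
  · rintro ⟨⟨a, b⟩, _⟩ - ⟨⟨a', b'⟩, _⟩ - h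
    simpa using h

lemma bipartitePi_mono {m m' n n' : ℕ} (hm : m ≤ m') (hn : n ≤ n') :
    bipartitePi m n ≤ bipartitePi m' n' := by
  obtain ⟨i, rfl⟩ := Nat.exists_eq_add_of_le hm
  obtain ⟨j, rfl⟩ := Nat.exists_eq_add_of_le hn
  refine (bipartitePi_le_bipartitePi_add_left m n i).trans ?_
  rw [bipartitePi_comm, bipartitePi_comm _ (n + j)]
  exact bipartitePi_le_bipartitePi_add_left n (m + i) j

section ConsecutiveDiff

open ENNReal Filter Topology

lemma SteadyPair.diffGF_eq_tsum (k : ℕ) (q : ℝ≥0∞) :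
    diffGF k q = ∑' n, (bipartitePi (n + k) n : ℝ≥0∞) * q ^ n := by
  have hterm (p : SteadyPair) :
      (if p.1.1.degree = p.1.2.degree + k then q ^ p.1.2.degree else 0) =
        ∑' n, (withSums (n + k) n).indicator (fun _ ↦ q ^ n) p := by
    rw [tsum_eq_single p.1.2.degree fun n hn ↦ Set.indicator_of_notMem (fun hp ↦ hn hp.2.symm) _]
    simp [Set.indicator_apply, withSums]
  simp_rw [diffGF, hterm]
  rw [ENNReal.tsum_comm]
  refine tsum_congr fun n ↦ ?_
  rw [← tsum_subtype (withSums (n + k) n) fun _ ↦ q ^ n, ENNReal.tsum_const,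
    bipartitePi_eq_ncard_withSums, ENat.card_coe_set_eq,
    ← (finite_withSums (n + k) n).cast_ncard_eq]
  rfl

/-- The coefficient of `q ^ n` in `P_k + q ^ (k + 1) * P_{k + 1}`, where
`P_k = ∑ n, π(n + k, n) * q ^ n`. -/
noncomputable def consecutiveDiffCount (k n : ℕ) : ℕ :=
  bipartitePi (n + k) n + if k + 1 ≤ n then bipartitePi n (n - (k + 1)) else 0

lemma tsum_consecutiveDiffCount (k : ℕ) (q : ℝ≥0∞) :
    ∑' n, (consecutiveDiffCount k n : ℝ≥0∞) * q ^ n =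
      diffGF k q + q ^ (k + 1) * diffGF (k + 1) q := by
  have hshift : ∑' n, ((if k + 1 ≤ n then bipartitePi n (n - (k + 1)) else 0 : ℕ) : ℝ≥0∞) * q ^ n =
      q ^ (k + 1) * diffGF (k + 1) q := by
    rw [diffGF_eq_tsum, ← ENNReal.tsum_mul_left,
      ← ENNReal.summable.sum_add_tsum_nat_add' (k := k + 1), sum_eq_zero, zero_add]
    · refine tsum_congr fun n ↦ ?_
      rw [if_pos (Nat.le_add_left _ _), Nat.add_sub_cancel, pow_add]
      ring
    · intro n hn
      rw [if_neg (by have := mem_range.1 hn; lia), Nat.cast_zero, zero_mul]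
  rw [diffGF_eq_tsum k, ← hshift, ← ENNReal.tsum_add]
  simp only [consecutiveDiffCount, Nat.cast_add, add_mul]

end ConsecutiveDiff

section EulerFunction

open ENNReal Filter Topology

/-- Euler's function `∏ n ≥ 1, (1 - q ^ n)`. -/
noncomputable def eulerPhi {𝕜 : Type*} [CommRing 𝕜] [TopologicalSpace 𝕜] (q : 𝕜) : 𝕜 :=
  ∏' n : ℕ, (1 - q ^ (n + 1))

section NormedField

variable {𝕜 : Type*} [NormedField 𝕜] {q : 𝕜}

lemma summable_norm_pow_succ (hq : ‖q‖ < 1) : Summable fun n : ℕ ↦ ‖-q ^ (n + 1)‖ := by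
  simpa using (summable_nat_add_iff 1).2 (summable_geometric_of_lt_one (norm_nonneg q) hq)

lemma one_sub_pow_succ_ne_zero (hq : ‖q‖ < 1) (n : ℕ) : 1 - q ^ (n + 1) ≠ 0 := by
  refine sub_ne_zero.2 fun h ↦ (pow_lt_one₀ (norm_nonneg q) hq n.succ_ne_zero).ne ?_
  rw [← norm_pow, ← h, norm_one]

variable [CompleteSpace 𝕜]

lemma multipliable_one_sub_pow_succ (hq : ‖q‖ < 1) :
    Multipliable fun n : ℕ ↦ 1 - q ^ (n + 1) := by
  simp only [sub_eq_add_neg]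
  exact multipliable_one_add_of_summable (summable_norm_pow_succ hq)

lemma tendsto_prod_eulerPhi (hq : ‖q‖ < 1) :
    Tendsto (fun N ↦ ∏ j ∈ range N, (1 - q ^ (j + 1))) atTop (𝓝 (eulerPhi q)) :=
  (multipliable_one_sub_pow_succ hq).hasProd.tendsto_prod_nat

lemma eulerPhi_ne_zero (hq : ‖q‖ < 1) : eulerPhi q ≠ 0 := by
  simp only [eulerPhi, sub_eq_add_neg]
  refine tprod_one_add_ne_zero_of_summable (fun n ↦ ?_) (summable_norm_pow_succ hq)
  rw [← sub_eq_add_neg]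
  exact one_sub_pow_succ_ne_zero hq n

end NormedField

lemma eulerPhi_ofReal {x : ℝ} (hx : ‖x‖ < 1) : eulerPhi (x : ℂ) = eulerPhi x := by
  simpa [eulerPhi] using ((multipliable_one_sub_pow_succ hx).map_tprod Complex.ofRealHom
    Complex.continuous_ofReal).symm

lemma eulerPhi_pos {x : ℝ} (hx : ‖x‖ < 1) : 0 < eulerPhi x := by
  refine lt_of_le_of_ne (ge_of_tendsto' (tendsto_prod_eulerPhi hx) fun N ↦
    prod_nonneg fun j _ ↦ ?_) (eulerPhi_ne_zero hx).symm
  have hpow : ‖x ^ (j + 1)‖ ≤ 1 := by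
    rw [norm_pow]
    exact pow_le_one₀ (norm_nonneg x) hx.le
  exact sub_nonneg.2 ((Real.le_norm_self _).trans hpow)

lemma differentiableOn_eulerPhi : DifferentiableOn ℂ eulerPhi (Metric.ball (0 : ℂ) 1) :=
  ModularForm.differentiableOn_tprod_one_sub_pow

lemma weightGF_succ_ofReal {x : ℝ} (hx₀ : 0 ≤ x) (hx₁ : x < 1) :
    weightGF (fun j ↦ j + 1) (ENNReal.ofReal x) = ENNReal.ofReal (eulerPhi x)⁻¹ := by
  have hx : ‖x‖ < 1 := by rwa [Real.norm_of_nonneg hx₀]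
  refine tendsto_nhds_unique (tendsto_prod_weightGF _ _) (Tendsto.congr (fun N ↦ ?_)
    (ENNReal.tendsto_ofReal ((tendsto_prod_eulerPhi hx).inv₀ (eulerPhi_ne_zero hx))))
  have hpos (j : ℕ) : 0 < 1 - x ^ (j + 1) := sub_pos.2 (pow_lt_one₀ hx₀ hx₁ j.succ_ne_zero)
  rw [← Finset.prod_inv_distrib (f := fun j ↦ 1 - x ^ (j + 1)),
    ENNReal.ofReal_prod_of_nonneg fun j _ ↦ (inv_pos.2 (hpos j)).le]
  refine prod_congr rfl fun j _ ↦ ?_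
  rw [ENNReal.ofReal_inv_of_pos (hpos j), ENNReal.ofReal_sub _ (pow_nonneg hx₀ _),
    ENNReal.ofReal_one, ENNReal.ofReal_pow hx₀]

/-- The generating function of `n ↦ π(n + k, n)` for `k ≥ n`. -/
noncomputable def stableGF {𝕜 : Type*} [Field 𝕜] [TopologicalSpace 𝕜] (q : 𝕜) : 𝕜 :=
  (eulerPhi q)⁻¹ ^ 2 * (eulerPhi (q ^ 2))⁻¹

lemma norm_sq_lt_one {𝕜 : Type*} [NormedField 𝕜] {q : 𝕜} (hq : ‖q‖ < 1) : ‖q ^ 2‖ < 1 := by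
  rw [norm_pow]
  exact pow_lt_one₀ (norm_nonneg q) hq two_ne_zero

lemma stableGF_ofReal {x : ℝ} (hx : ‖x‖ < 1) : stableGF (x : ℂ) = stableGF x := by
  have hsq := eulerPhi_ofReal (norm_sq_lt_one hx)
  push_cast at hsq
  simp [stableGF, eulerPhi_ofReal hx, hsq]

lemma stableGF_pos {x : ℝ} (hx : ‖x‖ < 1) : 0 < stableGF x :=
  mul_pos (pow_pos (inv_pos.2 (eulerPhi_pos hx)) 2) (inv_pos.2 (eulerPhi_pos (norm_sq_lt_one hx)))

lemma differentiableOn_stableGF : DifferentiableOn ℂ stableGF (Metric.ball (0 : ℂ) 1) := by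
  have hsq : Set.MapsTo (fun q : ℂ ↦ q ^ 2) (Metric.ball 0 1) (Metric.ball 0 1) := fun q hq ↦ by
    simpa using norm_sq_lt_one (mem_ball_zero_iff.1 hq)
  refine ((differentiableOn_eulerPhi.inv fun q hq ↦ ?_).pow 2).mul
    ((differentiableOn_eulerPhi.comp (by fun_prop) hsq).inv fun q hq ↦ ?_)
  · exact eulerPhi_ne_zero (mem_ball_zero_iff.1 hq)
  · exact eulerPhi_ne_zero (mem_ball_zero_iff.1 (hsq hq))

lemma hasSum_consecutiveDiffCount (k : ℕ) {x : ℝ} (hx₀ : 0 ≤ x) (hx₁ : x < 1) :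
    HasSum (fun n ↦ (consecutiveDiffCount k n : ℝ) * x ^ n) (stableGF x) := by
  have hx : ‖x‖ < 1 := by rwa [Real.norm_of_nonneg hx₀]
  have hgf := weightGF_succ_ofReal hx₀ hx₁
  have hgf_sq := weightGF_succ_ofReal (sq_nonneg x) (pow_lt_one₀ hx₀ hx₁ two_ne_zero)
  have hφ := (inv_pos.2 (eulerPhi_pos hx)).le
  have htsum : ∑' n, (consecutiveDiffCount k n : ℝ≥0∞) * ENNReal.ofReal x ^ n =
      ENNReal.ofReal (stableGF x) := by
    rw [tsum_consecutiveDiffCount, SteadyPair.diffGF_add (hgf ▸ ENNReal.ofReal_ne_top), hgf,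
      ← ENNReal.ofReal_pow hx₀, hgf_sq, ← ENNReal.ofReal_pow hφ,
      ← ENNReal.ofReal_mul (by positivity)]
    rfl
  have hsum := ENNReal.hasSum_toReal (htsum ▸ ENNReal.ofReal_ne_top)
  rw [← ENNReal.tsum_toReal_eq (ENNReal.ne_top_of_tsum_ne_top (htsum ▸ ENNReal.ofReal_ne_top)),
    htsum, ENNReal.toReal_ofReal (stableGF_pos hx).le] at hsum
  simpa [ENNReal.toReal_ofReal hx₀] using hsum

end EulerFunction

section CoefficientIntegral

open Filter Topology

lemma frequently_nhdsNE_zero_of_eventually_ofReal {P : ℂ → Prop}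
    (h : ∀ᶠ x : ℝ in 𝓝[>] 0, P x) : ∃ᶠ z in 𝓝[≠] (0 : ℂ), P z := by
  have hofReal : Tendsto (fun x : ℝ ↦ (x : ℂ)) (𝓝[>] 0) (𝓝[≠] 0) := by
    refine tendsto_nhdsWithin_iff.2 ⟨(Complex.continuous_ofReal.tendsto' 0 0 rfl).mono_left
      nhdsWithin_le_nhds, ?_⟩
    filter_upwards [self_mem_nhdsWithin] with x hx
    exact Complex.ofReal_ne_zero.2 (ne_of_gt hx)
  exact hofReal.frequently h.frequently

variable {a : ℕ → ℂ} {f : ℂ → ℂ}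

lemma hasFPowerSeriesAt_ofScalars (hf : AnalyticAt ℂ f 0)
    (ha : ∀ᶠ x : ℝ in 𝓝[>] 0, HasSum (fun n ↦ a n * (x : ℂ) ^ n) (f x)) :
    HasFPowerSeriesAt f (FormalMultilinearSeries.ofScalars ℂ a) 0 := by
  set p := FormalMultilinearSeries.ofScalars ℂ a
  obtain ⟨x, hx, hx_pos⟩ := (ha.and self_mem_nhdsWithin).exists
  have hradius : 0 < p.radius := by
    have hterm := hx.summable.norm.tendsto_atTop_zero
    refine (ENNReal.coe_pos.2 (Real.toNNReal_pos.2 hx_pos)).trans_le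
      (p.le_radius_of_tendsto (l := 0) (hterm.congr fun n ↦ ?_))
    simp [p, abs_of_pos hx_pos, hx_pos.le]
  have hp := (p.hasFPowerSeriesOnBall hradius).hasFPowerSeriesAt
  refine hp.congr ((hp.analyticAt.frequently_eq_iff_eventually_eq hf).1
    (frequently_nhdsNE_zero_of_eventually_ofReal ?_))
  filter_upwards [ha] with x hx
  simpa [p, FormalMultilinearSeries.sum, mul_comm] using hx.tsum_eq

lemma circleMap_exp_neg (t θ : ℝ) :
    circleMap 0 (Real.exp (-t)) θ = Complex.exp (-(t - Complex.I * θ)) := by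
  rw [circleMap, zero_add, Complex.ofReal_exp, ← Complex.exp_add]
  push_cast
  ring_nf

lemma integral_eq_circleIntegral_exp_neg (t : ℝ) (n : ℕ) :
    (2 * Real.pi : ℂ)⁻¹ * ∫ θ in -Real.pi..Real.pi,
        f (Complex.exp (-(t - Complex.I * θ))) * Complex.exp (n * (t - Complex.I * θ)) =
      (2 * Real.pi * Complex.I)⁻¹ * ∮ z in C(0, Real.exp (-t)), (1 / z) ^ n * (z⁻¹ * f z) := by
  set F : ℝ → ℂ := fun θ ↦
    f (Complex.exp (-(t - Complex.I * θ))) * Complex.exp (n * (t - Complex.I * θ))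
  have hF : Function.Periodic F (2 * Real.pi) := fun θ ↦ by
    have hq : Complex.exp (-(t - Complex.I * (θ + 2 * Real.pi : ℝ))) =
        Complex.exp (-(t - Complex.I * θ)) :=
      Complex.exp_eq_exp_iff_exists_int.2 ⟨1, by push_cast; ring⟩
    have hpow : Complex.exp (n * (t - Complex.I * (θ + 2 * Real.pi : ℝ))) =
        Complex.exp (n * (t - Complex.I * θ)) :=
      Complex.exp_eq_exp_iff_exists_int.2 ⟨-n, by push_cast; ring⟩
    simp only [F, hq, hpow]
  have hshift := hF.intervalIntegral_add_eq (-Real.pi) 0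
  rw [show -Real.pi + 2 * Real.pi = Real.pi by ring, zero_add] at hshift
  have hintegrand (θ : ℝ) : deriv (circleMap 0 (Real.exp (-t))) θ •
      ((1 / circleMap 0 (Real.exp (-t)) θ) ^ n * ((circleMap 0 (Real.exp (-t)) θ)⁻¹ *
        f (circleMap 0 (Real.exp (-t)) θ))) = Complex.I * F θ := by
    have hpow : Complex.exp (n * (t - Complex.I * θ)) =
        (1 / Complex.exp (-(t - Complex.I * θ))) ^ n := by
      rw [one_div, ← Complex.exp_neg, ← Complex.exp_nat_mul, neg_neg]
    rw [deriv_circleMap, circleMap_exp_neg, smul_eq_mul]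
    simp only [F, hpow]
    field_simp [Complex.exp_ne_zero]
  rw [hshift, circleIntegral]
  simp only [hintegrand]
  rw [intervalIntegral.integral_const_mul]
  field_simp [Complex.I_ne_zero]

lemma coeff_eq_integral (hf : DifferentiableOn ℂ f (Metric.ball 0 1))
    (ha : ∀ᶠ x : ℝ in 𝓝[>] 0, HasSum (fun n ↦ a n * (x : ℂ) ^ n) (f x)) {t : ℝ} (ht : 0 < t)
    (n : ℕ) :
    a n = (2 * Real.pi : ℂ)⁻¹ * ∫ θ in -Real.pi..Real.pi,
      f (Complex.exp (-(t - Complex.I * θ))) * Complex.exp (n * (t - Complex.I * θ)) := by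
  have hcauchy : HasFPowerSeriesOnBall f (cauchyPowerSeries f 0 (Real.exp (-t))) 0
      (Real.toNNReal (Real.exp (-t))) := by
    have hclosed : DifferentiableOn ℂ f (Metric.closedBall 0 (Real.exp (-t)).toNNReal) := by
      rw [Real.coe_toNNReal _ (Real.exp_pos _).le]
      exact hf.mono (Metric.closedBall_subset_ball (by simpa using ht))
    simpa [(Real.exp_pos (-t)).le] using
      hclosed.hasFPowerSeriesOnBall (Real.toNNReal_pos.2 (Real.exp_pos _))
  have hseries := (hasFPowerSeriesAt_ofScalars hcauchy.analyticAt ha).eq_formalMultilinearSeries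
    hcauchy.hasFPowerSeriesAt
  have hcoeff := congrArg (fun p ↦ p n fun _ ↦ (1 : ℂ)) hseries
  simp only [FormalMultilinearSeries.ofScalars_apply_eq, cauchyPowerSeries_apply, one_pow,
    smul_eq_mul, mul_one, sub_zero] at hcoeff
  rw [hcoeff, integral_eq_circleIntegral_exp_neg]

end CoefficientIntegral

section StableCount

open Filter Topology

lemma hasSum_consecutiveDiffCount_complex (k : ℕ) :
    ∀ᶠ x : ℝ in 𝓝[>] 0,
      HasSum (fun n ↦ (consecutiveDiffCount k n : ℂ) * (x : ℂ) ^ n) (stableGF (x : ℂ)) := by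
  filter_upwards [Ioo_mem_nhdsGT zero_lt_one] with x ⟨hx₀, hx₁⟩
  rw [stableGF_ofReal (by rwa [Real.norm_of_nonneg hx₀.le])]
  simpa using Complex.hasSum_ofReal.2 (hasSum_consecutiveDiffCount k hx₀.le hx₁)

lemma consecutiveDiffCount_eq (k k' n : ℕ) :
    consecutiveDiffCount k n = consecutiveDiffCount k' n := by
  have h (l : ℕ) := coeff_eq_integral differentiableOn_stableGF
    (hasSum_consecutiveDiffCount_complex l) one_pos n
  exact_mod_cast (h k).trans (h k').symm

/-- The common value of `π(n + k, n)` for all `k ≥ n`. -/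
noncomputable def stablePi (n : ℕ) : ℕ := bipartitePi (n + n) n

lemma consecutiveDiffCount_eq_stablePi (k n : ℕ) : consecutiveDiffCount k n = stablePi n := by
  rw [consecutiveDiffCount_eq k n, consecutiveDiffCount, if_neg (by lia), add_zero, stablePi]

lemma bipartitePi_add_eq_stablePi {k n : ℕ} (h : n ≤ k) :
    bipartitePi (n + k) n = stablePi n := by
  rw [← consecutiveDiffCount_eq_stablePi k n, consecutiveDiffCount, if_neg (by lia), add_zero]

lemma bipartitePi_add_bipartitePi_eq_stablePi {k n : ℕ} (h : k + 1 ≤ n) :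
    bipartitePi (n + k) n + bipartitePi n (n - (k + 1)) = stablePi n := by
  rw [← consecutiveDiffCount_eq_stablePi k n, consecutiveDiffCount, if_pos h]

lemma hasSum_stablePi :
    ∀ᶠ x : ℝ in 𝓝[>] 0, HasSum (fun n ↦ (stablePi n : ℂ) * (x : ℂ) ^ n) (stableGF (x : ℂ)) := by
  simpa only [consecutiveDiffCount_eq_stablePi] using hasSum_consecutiveDiffCount_complex 0

lemma monotone_stablePi : Monotone stablePi :=
  fun _ _ h ↦ bipartitePi_mono (add_le_add h h) h

lemma bipartitePi_add_le_stablePi (k n : ℕ) : bipartitePi (n + k) n ≤ stablePi n := by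
  rw [← consecutiveDiffCount_eq_stablePi k n, consecutiveDiffCount]
  exact Nat.le_add_right _ _

lemma stablePi_le_two_mul_bipartitePi (k n : ℕ) : stablePi n ≤ 2 * bipartitePi (n + k) n := by
  obtain h | h := lt_or_ge n (k + 1)
  · rw [bipartitePi_add_eq_stablePi (Nat.lt_succ_iff.1 h)]
    lia
  · have hmono : bipartitePi n (n - (k + 1)) ≤ bipartitePi (n + k) n :=
      bipartitePi_mono (Nat.le_add_right n k) (Nat.sub_le n _)
    linarith [bipartitePi_add_bipartitePi_eq_stablePi h]

lemma two_mul_bipartitePi_le_stablePi (k n : ℕ) :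
    2 * bipartitePi (n + k) n ≤ stablePi (n + k + 1) := by
  have hmono : bipartitePi (n + k) n ≤ bipartitePi (n + k + 1 + k) (n + k + 1) :=
    bipartitePi_mono (by lia) (by lia)
  have hmono' : bipartitePi (n + k) n ≤ bipartitePi (n + k + 1) n :=
    bipartitePi_mono (Nat.le_succ _) le_rfl
  have h := bipartitePi_add_bipartitePi_eq_stablePi (k := k) (n := n + k + 1) (by lia)
  rw [show n + k + 1 - (k + 1) = n by lia] at h
  lia

end StableCount

section SaddlePoint

open Complex Filter MeasureTheory Topology

/-- The cone `|Im τ| ≤ Re τ` without its apex, in which `exp (-τ)` tends to `1` nontangentially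
as `τ → 0`. -/
def rightCone : Set ℂ := {τ | 0 < τ.re ∧ |τ.im| ≤ τ.re}

/-- The factor `1 - i v / L` by which `saddlePath` deviates from the saddle point. -/
noncomputable def tilt (L v : ℝ) : ℂ := 1 - I * (v / L : ℝ)

/-- The vertical line through the saddle point `B / L ^ 2` of `τ ↦ B ^ 2 / τ + L ^ 4 * τ`,
parametrized so that the integrand is asymptotically Gaussian in `v`. -/
noncomputable def saddlePath (B L v : ℝ) : ℂ := (B / L ^ 2 : ℝ) * tilt L v

lemma re_tilt (L v : ℝ) : (tilt L v).re = 1 := by simp [tilt]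

lemma im_tilt (L v : ℝ) : (tilt L v).im = -(v / L) := by simp [tilt, -ofReal_div]

lemma tilt_ne_zero (L v : ℝ) : tilt L v ≠ 0 := fun h ↦ by simpa [h] using re_tilt L v

lemma tendsto_tilt (v : ℝ) : Tendsto (fun L ↦ tilt L v) atTop (𝓝 1) := by
  have hdiv : Tendsto (fun L : ℝ ↦ v / L) atTop (𝓝 0) := tendsto_const_nhds.div_atTop tendsto_id
  simpa [tilt] using (hdiv.ofReal.const_mul I).const_sub 1

lemma continuous_tilt (L : ℝ) : Continuous (tilt L) := by
  unfold tilt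
  fun_prop

lemma sq_ofReal_eq_tilt {L : ℝ} (hL : L ≠ 0) (v : ℝ) :
    (v : ℂ) ^ 2 = -(L ^ 2 * (tilt L v - 1) ^ 2) := by
  have hL' : (L : ℂ) ≠ 0 := ofReal_ne_zero.2 hL
  simp only [tilt, ofReal_div]
  field_simp
  linear_combination (v : ℂ) ^ 2 * I_sq

lemma one_le_norm_tilt (L v : ℝ) : 1 ≤ ‖tilt L v‖ := by
  simpa [re_tilt] using abs_re_le_norm (tilt L v)

lemma abs_div_le_one {L v : ℝ} (hv : |v| ≤ L) : |v / L| ≤ 1 := by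
  rw [abs_div]
  exact div_le_one_of_le₀ (hv.trans (le_abs_self L)) (abs_nonneg L)

lemma norm_tilt_le_two {L v : ℝ} (hv : |v| ≤ L) : ‖tilt L v‖ ≤ 2 := by
  have h := norm_le_abs_re_add_abs_im (tilt L v)
  rw [re_tilt, im_tilt, abs_one, abs_neg] at h
  linarith [abs_div_le_one hv]

lemma norm_tilt_cpow_le {L v : ℝ} (hv : |v| ≤ L) (β : ℝ) : ‖tilt L v ^ (β : ℂ)‖ ≤ 2 ^ |β| := by
  rw [norm_cpow_real]
  exact (Real.rpow_le_rpow_of_exponent_le (one_le_norm_tilt L v) (le_abs_self β)).trans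
    (Real.rpow_le_rpow (norm_nonneg _) (norm_tilt_le_two hv) (abs_nonneg β))

lemma half_le_re_inv_tilt {L v : ℝ} (hv : |v| ≤ L) : 1 / 2 ≤ ((tilt L v)⁻¹).re := by
  have hsq : (v / L) ^ 2 ≤ 1 := (sq_le_one_iff_abs_le_one _).2 (abs_div_le_one hv)
  rw [inv_re, normSq_apply, re_tilt, im_tilt]
  exact one_div_le_one_div_of_le (by nlinarith) (by nlinarith)

variable {B : ℝ}

lemma re_saddlePath (B L v : ℝ) : (saddlePath B L v).re = B / L ^ 2 := by
  rw [saddlePath, re_ofReal_mul, re_tilt, mul_one]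

lemma saddlePath_eq_sub (B L v : ℝ) :
    saddlePath B L v = (B / L ^ 2 : ℝ) - I * (B / L ^ 3 * v : ℝ) := by
  simp only [saddlePath, tilt]
  push_cast
  ring

lemma saddlePath_mem_rightCone (hB : 0 < B) {L v : ℝ} (hL : 0 < L) (hv : |v| ≤ L) :
    saddlePath B L v ∈ rightCone := by
  have hpos : 0 < B / L ^ 2 := by positivity
  refine ⟨by rwa [re_saddlePath], ?_⟩
  rw [re_saddlePath, saddlePath, im_ofReal_mul, im_tilt, abs_mul, abs_neg, abs_of_pos hpos]
  exact mul_le_of_le_one_right hpos.le (abs_div_le_one hv)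

lemma tendsto_saddlePath (hB : 0 < B) :
    Tendsto (fun p : ℝ × ℝ ↦ saddlePath B p.1 p.2)
      (comap Prod.fst atTop ⊓ 𝓟 {p | |p.2| ≤ p.1}) (𝓝[rightCone] 0) := by
  have hfst : Tendsto Prod.fst (comap Prod.fst atTop ⊓ 𝓟 {p : ℝ × ℝ | |p.2| ≤ p.1}) atTop :=
    tendsto_comap.mono_left inf_le_left
  have hcone : ∀ᶠ p : ℝ × ℝ in comap Prod.fst atTop ⊓ 𝓟 {p | |p.2| ≤ p.1}, |p.2| ≤ p.1 :=
    mem_inf_of_right (mem_principal_self _)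
  refine tendsto_nhdsWithin_iff.2 ⟨squeeze_zero_norm' (a := fun p ↦ B / p.1 ^ 2 * 2) ?_ ?_, ?_⟩
  · filter_upwards [hcone] with p hp
    rw [saddlePath, norm_mul, norm_real, Real.norm_of_nonneg (by positivity)]
    gcongr
    exact norm_tilt_le_two hp
  · simpa using ((tendsto_const_nhds (x := B)).div_atTop
      ((tendsto_pow_atTop two_ne_zero).comp hfst)).mul_const 2
  · filter_upwards [hcone, hfst.eventually_gt_atTop 0] with p hp hL
    exact saddlePath_mem_rightCone hB hL hp

lemma ofReal_mul_cpow {r : ℝ} (hr : 0 < r) {z : ℂ} (hz : z ≠ 0) (s : ℂ) :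
    (r * z) ^ s = (r : ℂ) ^ s * z ^ s := by
  have hr' : (r : ℂ) ≠ 0 := ofReal_ne_zero.2 hr.ne'
  rw [cpow_def_of_ne_zero (mul_ne_zero hr' hz), log_ofReal_mul hr hz, ofReal_log hr.le, add_mul,
    exp_add, ← cpow_def_of_ne_zero hr', ← cpow_def_of_ne_zero hz]

lemma saddlePath_cpow (hB : 0 < B) {L : ℝ} (hL : 0 < L) (v β : ℝ) :
    saddlePath B L v ^ (β : ℂ) = ((B ^ β * L ^ (-(2 * β)) : ℝ) : ℂ) * tilt L v ^ (β : ℂ) := by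
  have hscale : (B / L ^ 2) ^ β = B ^ β * L ^ (-(2 * β)) := by
    rw [Real.div_rpow hB.le (sq_nonneg L), ← Real.rpow_natCast L 2, ← Real.rpow_mul hL.le,
      Real.rpow_neg hL.le, div_eq_mul_inv, Nat.cast_ofNat]
  rw [← hscale, saddlePath, ofReal_cpow (by positivity)]
  exact ofReal_mul_cpow (by positivity) (tilt_ne_zero L v) _

lemma exp_mul_exp_saddlePath (hB : 0 < B) {L : ℝ} (hL : 0 < L) (v : ℝ) :
    exp (B ^ 2 / saddlePath B L v) * exp (L ^ 4 * saddlePath B L v) =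
      exp (2 * B * L ^ 2 : ℝ) * exp (-((B * v ^ 2 : ℝ) * (tilt L v)⁻¹)) := by
  have hL' : (L : ℂ) ≠ 0 := ofReal_ne_zero.2 hL.ne'
  have hB' : (B : ℂ) ≠ 0 := ofReal_ne_zero.2 hB.ne'
  have htilt := tilt_ne_zero L v
  rw [← exp_add, ← exp_add, saddlePath]
  push_cast
  rw [sq_ofReal_eq_tilt hL.ne' v]
  congr 1
  field_simp
  ring

/-- The integrand of the coefficient integral of `f` along `saddlePath`, divided by the order of
magnitude `exp (2 * B * L ^ 2) / L ^ (2 * β)` it has at the saddle point. -/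
noncomputable def saddleIntegrand (f : ℂ → ℂ) (B β L v : ℝ) : ℂ :=
  (L ^ (2 * β) * Real.exp (-(2 * B * L ^ 2)) : ℝ) *
    (f (exp (-saddlePath B L v)) * exp (L ^ 4 * saddlePath B L v))

variable {f : ℂ → ℂ} {β : ℝ}

lemma saddleIntegrand_eq (hB : 0 < B) {L : ℝ} (hL : 0 < L) (v : ℝ) :
    saddleIntegrand f B β L v =
      f (exp (-saddlePath B L v)) /
        (saddlePath B L v ^ (β : ℂ) * exp (B ^ 2 / saddlePath B L v)) *
      ((B ^ β : ℝ) * tilt L v ^ (β : ℂ) * exp (-((B * v ^ 2 : ℝ) * (tilt L v)⁻¹))) := by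
  have hrpow : ((L ^ (2 * β) : ℝ) : ℂ) * (L ^ (-(2 * β)) : ℝ) = 1 := by
    rw [← ofReal_mul, ← Real.rpow_add hL, add_neg_cancel, Real.rpow_zero, ofReal_one]
  have hexp : (Real.exp (-(2 * B * L ^ 2)) : ℂ) * exp (2 * B * L ^ 2 : ℝ) = 1 := by
    rw [ofReal_exp, ← exp_add, ofReal_neg, neg_add_cancel, exp_zero]
  have hpath : saddlePath B L v ^ (β : ℂ) ≠ 0 := by
    rw [cpow_ne_zero_iff]
    exact .inl (mul_ne_zero (ofReal_ne_zero.2 (by positivity)) (tilt_ne_zero L v))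
  calc saddleIntegrand f B β L v
    _ = f (exp (-saddlePath B L v)) /
          (saddlePath B L v ^ (β : ℂ) * exp (B ^ 2 / saddlePath B L v)) *
        ((L ^ (2 * β) : ℝ) * (Real.exp (-(2 * B * L ^ 2)) : ℂ) * saddlePath B L v ^ (β : ℂ) *
          (exp (B ^ 2 / saddlePath B L v) * exp (L ^ 4 * saddlePath B L v))) := by
      rw [saddleIntegrand, ofReal_mul]
      field_simp
    _ = _ := by
      rw [exp_mul_exp_saddlePath hB hL, saddlePath_cpow hB hL v β, ofReal_mul]
      congr 1
      linear_combination (B ^ β : ℝ) * tilt L v ^ (β : ℂ) *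
        exp (-((B * v ^ 2 : ℝ) * (tilt L v)⁻¹)) *
          (Real.exp (-(2 * B * L ^ 2)) * exp (2 * B * L ^ 2 : ℝ) * hrpow + hexp)

lemma tendsto_saddleIntegrand (hB : 0 < B) {c : ℂ}
    (hmajor : Tendsto (fun τ ↦ f (exp (-τ)) / (τ ^ (β : ℂ) * exp (B ^ 2 / τ))) (𝓝[rightCone] 0)
      (𝓝 c)) (v : ℝ) :
    Tendsto (fun L ↦ saddleIntegrand f B β L v) atTop
      (𝓝 (c * ((B ^ β : ℝ) * exp (-(B * v ^ 2 : ℝ))))) := by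
  have hpath : Tendsto (fun L ↦ saddlePath B L v) atTop (𝓝[rightCone] 0) := by
    refine (tendsto_saddlePath hB).comp (f := fun L ↦ (L, v)) ?_
    exact tendsto_inf.2 ⟨tendsto_comap_iff.2 tendsto_id,
      tendsto_principal.2 (eventually_ge_atTop |v|)⟩
  have hcpow : Tendsto (fun L ↦ tilt L v ^ (β : ℂ)) atTop (𝓝 1) := by
    simpa using (tendsto_tilt v).cpow (tendsto_const_nhds (x := (β : ℂ))) (by simp)
  have hexp : Tendsto (fun L ↦ exp (-((B * v ^ 2 : ℝ) * (tilt L v)⁻¹))) atTop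
      (𝓝 (exp (-(B * v ^ 2 : ℝ)))) := by
    simpa only [inv_one, mul_one] using
      (((tendsto_tilt v).inv₀ one_ne_zero).const_mul ((B * v ^ 2 : ℝ) : ℂ)).neg.cexp
  have hprod := (hmajor.comp hpath).mul ((hcpow.const_mul ((B ^ β : ℝ) : ℂ)).mul hexp)
  rw [mul_one] at hprod
  refine hprod.congr' ?_
  filter_upwards [eventually_gt_atTop 0] with L hL
  exact (saddleIntegrand_eq hB hL v).symm

lemma norm_saddleIntegrand_le_gaussian (hB : 0 < B) {c : ℂ}
    (hmajor : Tendsto (fun τ ↦ f (exp (-τ)) / (τ ^ (β : ℂ) * exp (B ^ 2 / τ))) (𝓝[rightCone] 0)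
      (𝓝 c)) :
    ∃ D, 0 ≤ D ∧ ∀ᶠ L in atTop, ∀ v, |v| ≤ L →
      ‖saddleIntegrand f B β L v‖ ≤ D * Real.exp (-(B / 2) * v ^ 2) := by
  refine ⟨(‖c‖ + 1) * (B ^ β * 2 ^ |β|), by positivity, ?_⟩
  have hquot := (tendsto_saddlePath hB).eventually
    (hmajor.norm.eventually_le_const (lt_add_one ‖c‖))
  rw [eventually_inf_principal, eventually_comap] at hquot
  filter_upwards [hquot, eventually_gt_atTop 0] with L hquot hL v hv
  have hexp : ‖exp (-((B * v ^ 2 : ℝ) * (tilt L v)⁻¹))‖ ≤ Real.exp (-(B / 2) * v ^ 2) := by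
    rw [norm_exp, Real.exp_le_exp, neg_re, re_ofReal_mul]
    have h := mul_le_mul_of_nonneg_left (half_le_re_inv_tilt hv) (by positivity : 0 ≤ B * v ^ 2)
    linarith
  rw [saddleIntegrand_eq hB hL, norm_mul, norm_mul, norm_mul, norm_real,
    Real.norm_of_nonneg (by positivity), mul_assoc (‖c‖ + 1)]
  gcongr
  · exact hquot (L, v) rfl hv
  · exact norm_tilt_cpow_le hv β

lemma norm_saddleIntegrand {L : ℝ} (hL : 0 < L) (v : ℝ) :
    ‖saddleIntegrand f B β L v‖ =
      L ^ (2 * β) * Real.exp (-(B * L ^ 2)) * ‖f (exp (-saddlePath B L v))‖ := by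
  have hre : ((L : ℂ) ^ 4 * saddlePath B L v).re = B * L ^ 2 := by
    rw [← ofReal_pow, re_ofReal_mul, re_saddlePath]
    field_simp
  rw [saddleIntegrand, norm_mul, norm_mul, norm_real, norm_exp, hre,
    Real.norm_of_nonneg (by positivity),
    show -(2 * B * L ^ 2) = -(B * L ^ 2) + -(B * L ^ 2) by ring, Real.exp_add]
  have hexp : Real.exp (-(B * L ^ 2)) * Real.exp (B * L ^ 2) = 1 := by
    rw [← Real.exp_add, neg_add_cancel, Real.exp_zero]
  linear_combination L ^ (2 * β) * Real.exp (-(B * L ^ 2)) * ‖f (exp (-saddlePath B L v))‖ * hexp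

lemma tendsto_polynomial_mul_exp_neg_sq (D β : ℝ) {b : ℝ} (hb : 0 < b) :
    Tendsto (fun L : ℝ ↦ (1 + (D * L ^ 3) ^ 2) * (L ^ (2 * β) * Real.exp (-(b * L ^ 2)))) atTop
      (𝓝 0) := by
  have hsq : Tendsto (fun L : ℝ ↦ L ^ 2) atTop atTop := tendsto_pow_atTop two_ne_zero
  have h₀ := (tendsto_rpow_mul_exp_neg_mul_atTop_nhds_zero β b hb).comp hsq
  have h₃ := (tendsto_rpow_mul_exp_neg_mul_atTop_nhds_zero (β + 3) b hb).comp hsq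
  have hsum := h₀.add (h₃.const_mul (D ^ 2))
  rw [mul_zero, add_zero] at hsum
  refine hsum.congr' ?_
  filter_upwards [eventually_gt_atTop 0] with L hL
  have hpow : (L ^ 2) ^ β = L ^ (2 * β) := by
    rw [← Real.rpow_natCast, ← Real.rpow_mul hL.le, Nat.cast_ofNat]
  have hpow' : (L ^ 2) ^ (β + 3) = L ^ (2 * β) * L ^ 6 := by
    rw [Real.rpow_add (by positivity), hpow, show (3 : ℝ) = (3 : ℕ) by norm_num, Real.rpow_natCast,
      ← pow_mul]
  simp only [Function.comp_apply, hpow, hpow', neg_mul]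
  ring

lemma norm_saddleIntegrand_le_inv_one_add_sq (hB : 0 < B) {C δ : ℝ} (hC : 0 ≤ C) (hδ : 0 < δ)
    (hminor : ∀ᶠ t : ℝ in 𝓝[>] 0, ∀ θ : ℝ, t ≤ |θ| → |θ| ≤ Real.pi →
      ‖f (exp (-(t - I * θ)))‖ ≤ C * Real.exp ((B ^ 2 - δ) / t)) :
    ∀ᶠ L in atTop, ∀ v, L ≤ |v| → |v| ≤ Real.pi / B * L ^ 3 →
      ‖saddleIntegrand f B β L v‖ ≤ C * (1 + v ^ 2)⁻¹ := by
  have ht : Tendsto (fun L ↦ B / L ^ 2) atTop (𝓝[>] 0) := by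
    refine tendsto_nhdsWithin_iff.2
      ⟨tendsto_const_nhds.div_atTop (tendsto_pow_atTop two_ne_zero), ?_⟩
    filter_upwards [eventually_gt_atTop 0] with L hL
    exact div_pos hB (by positivity)
  filter_upwards [ht.eventually hminor, eventually_gt_atTop 0,
    (tendsto_polynomial_mul_exp_neg_sq (Real.pi / B) β (div_pos hδ hB)).eventually_le_const
      one_pos] with L hminor hL hpoly v hLv hv
  have habs : |B / L ^ 3 * v| = B / L ^ 3 * |v| := by rw [abs_mul, abs_of_pos (by positivity)]
  have hlower : B / L ^ 2 ≤ |B / L ^ 3 * v| := by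
    calc B / L ^ 2 = B / L ^ 3 * L := by field_simp
      _ ≤ |B / L ^ 3 * v| := by rw [habs]; gcongr
  have hupper : |B / L ^ 3 * v| ≤ Real.pi := by
    calc |B / L ^ 3 * v| ≤ B / L ^ 3 * (Real.pi / B * L ^ 3) := by rw [habs]; gcongr
      _ = Real.pi := by field_simp
  have hf := hminor _ hlower hupper
  rw [← saddlePath_eq_sub] at hf
  have hexp : Real.exp (-(B * L ^ 2)) * Real.exp ((B ^ 2 - δ) / (B / L ^ 2)) =
      Real.exp (-(δ / B * L ^ 2)) := by
    rw [← Real.exp_add]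
    congr 1
    field_simp
    ring
  have hv_sq : 1 + v ^ 2 ≤ 1 + (Real.pi / B * L ^ 3) ^ 2 := by
    rw [← sq_abs v]
    gcongr
  rw [norm_saddleIntegrand hL, ← div_eq_mul_inv, le_div_iff₀ (by positivity)]
  calc L ^ (2 * β) * Real.exp (-(B * L ^ 2)) * ‖f (exp (-saddlePath B L v))‖ * (1 + v ^ 2)
    _ ≤ L ^ (2 * β) * Real.exp (-(B * L ^ 2)) * (C * Real.exp ((B ^ 2 - δ) / (B / L ^ 2))) *
        (1 + (Real.pi / B * L ^ 3) ^ 2) := by gcongr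
    _ = C * ((1 + (Real.pi / B * L ^ 3) ^ 2) * (L ^ (2 * β) * Real.exp (-(δ / B * L ^ 2)))) := by
      rw [← hexp]
      ring
    _ ≤ C := mul_le_of_le_one_right hC hpoly

lemma continuous_saddleIntegrand (hf : DifferentiableOn ℂ f (Metric.ball 0 1)) (hB : 0 < B)
    {L : ℝ} (hL : 0 < L) : Continuous (saddleIntegrand f B β L) := by
  have hpath : Continuous (saddlePath B L) := continuous_const.mul (continuous_tilt L)
  have hcomp : Continuous fun v ↦ f (exp (-saddlePath B L v)) := by
    refine hf.continuousOn.comp_continuous (by fun_prop) fun v ↦ ?_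
    rw [mem_ball_zero_iff, norm_exp, neg_re, re_saddlePath, Real.exp_lt_one_iff, neg_lt_zero]
    positivity
  exact continuous_const.mul (hcomp.mul (continuous_const.mul hpath).cexp)

lemma eventually_norm_indicator_saddleIntegrand_le (hB : 0 < B) {c : ℂ} {C δ : ℝ} (hC : 0 ≤ C)
    (hδ : 0 < δ)
    (hmajor : Tendsto (fun τ ↦ f (exp (-τ)) / (τ ^ (β : ℂ) * exp (B ^ 2 / τ))) (𝓝[rightCone] 0)
      (𝓝 c))
    (hminor : ∀ᶠ t : ℝ in 𝓝[>] 0, ∀ θ : ℝ, t ≤ |θ| → |θ| ≤ Real.pi →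
      ‖f (exp (-(t - I * θ)))‖ ≤ C * Real.exp ((B ^ 2 - δ) / t)) :
    ∃ D, ∀ᶠ L in atTop, ∀ v, ‖(Set.Ioc (-(Real.pi / B * L ^ 3)) (Real.pi / B * L ^ 3)).indicator
      (saddleIntegrand f B β L) v‖ ≤ D * Real.exp (-(B / 2) * v ^ 2) + C * (1 + v ^ 2)⁻¹ := by
  obtain ⟨D, hD, hgaussian⟩ := norm_saddleIntegrand_le_gaussian hB hmajor
  refine ⟨D, ?_⟩
  filter_upwards [hgaussian, norm_saddleIntegrand_le_inv_one_add_sq hB hC hδ hminor] with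
    L hgaussian hinv v
  have hD' : 0 ≤ D * Real.exp (-(B / 2) * v ^ 2) := by positivity
  have hC' : 0 ≤ C * (1 + v ^ 2)⁻¹ := by positivity
  by_cases hv : v ∈ Set.Ioc (-(Real.pi / B * L ^ 3)) (Real.pi / B * L ^ 3)
  · rw [Set.indicator_of_mem hv]
    obtain hvL | hvL := le_total |v| L
    · exact le_add_of_le_of_nonneg (hgaussian v hvL) hC'
    · exact le_add_of_nonneg_of_le hD' (hinv v hvL (abs_le.2 ⟨hv.1.le, hv.2⟩))
  · rw [Set.indicator_of_notMem hv, norm_zero]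
    positivity

lemma tendsto_integral_saddleIntegrand (hf : DifferentiableOn ℂ f (Metric.ball 0 1)) (hB : 0 < B)
    {c : ℂ} {C δ : ℝ} (hC : 0 ≤ C) (hδ : 0 < δ)
    (hmajor : Tendsto (fun τ ↦ f (exp (-τ)) / (τ ^ (β : ℂ) * exp (B ^ 2 / τ))) (𝓝[rightCone] 0)
      (𝓝 c))
    (hminor : ∀ᶠ t : ℝ in 𝓝[>] 0, ∀ θ : ℝ, t ≤ |θ| → |θ| ≤ Real.pi →
      ‖f (exp (-(t - I * θ)))‖ ≤ C * Real.exp ((B ^ 2 - δ) / t)) :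
    Tendsto (fun L : ℝ ↦ ∫ v in -(Real.pi / B * L ^ 3)..Real.pi / B * L ^ 3,
      saddleIntegrand f B β L v) atTop (𝓝 (c * (B ^ β * √(Real.pi / B) : ℝ))) := by
  obtain ⟨D, hbound⟩ := eventually_norm_indicator_saddleIntegrand_le hB hC hδ hmajor hminor
  have hend : Tendsto (fun L : ℝ ↦ Real.pi / B * L ^ 3) atTop atTop :=
    (tendsto_pow_atTop three_ne_zero).const_mul_atTop (by positivity)
  have hlimit : ∫ v : ℝ, c * ((B ^ β : ℝ) * exp (-(B * v ^ 2 : ℝ))) =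
      c * (B ^ β * √(Real.pi / B) : ℝ) := by
    simp_rw [← ofReal_neg, ← ofReal_exp, ← neg_mul]
    rw [integral_const_mul, integral_const_mul, integral_complex_ofReal, integral_gaussian,
      ofReal_mul]
  rw [← hlimit]
  suffices h : Tendsto (fun L : ℝ ↦ ∫ v, (Set.Ioc (-(Real.pi / B * L ^ 3))
      (Real.pi / B * L ^ 3)).indicator (saddleIntegrand f B β L) v) atTop
      (𝓝 (∫ v : ℝ, c * ((B ^ β : ℝ) * exp (-(B * v ^ 2 : ℝ))))) by
    refine h.congr' ?_
    filter_upwards [hend.eventually_ge_atTop 0] with L hL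
    rw [integral_indicator measurableSet_Ioc,
      intervalIntegral.integral_of_le (neg_le_self hL)]
  refine tendsto_integral_filter_of_dominated_convergence
    (fun v ↦ D * Real.exp (-(B / 2) * v ^ 2) + C * (1 + v ^ 2)⁻¹) ?_ ?_ ?_ ?_
  · filter_upwards [eventually_gt_atTop 0] with L hL
    exact (continuous_saddleIntegrand hf hB hL).aestronglyMeasurable.indicator measurableSet_Ioc
  · exact hbound.mono fun L hL ↦ .of_forall hL
  · exact ((integrable_exp_neg_mul_sq (by positivity)).const_mul _).add
      (integrable_inv_one_add_sq.const_mul _)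
  · refine .of_forall fun v ↦ (tendsto_saddleIntegrand hB hmajor v).congr' ?_
    filter_upwards [hend.eventually_gt_atTop |v|] with L hL
    exact (Set.indicator_of_mem (Set.Ioo_subset_Ioc_self (abs_lt.1 hL)) _).symm

variable {a : ℕ → ℂ}

lemma coeff_eq_integral_saddleIntegrand (hf : DifferentiableOn ℂ f (Metric.ball 0 1))
    (ha : ∀ᶠ x : ℝ in 𝓝[>] 0, HasSum (fun n ↦ a n * (x : ℂ) ^ n) (f x)) (hB : 0 < B) {L : ℝ}
    (hL : 0 < L) {n : ℕ} (hn : L ^ 4 = n) :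
    a n * (L ^ (3 + 2 * β) * Real.exp (-(2 * B * L ^ 2)) : ℝ) = (B / (2 * Real.pi) : ℝ) *
      ∫ v in -(Real.pi / B * L ^ 3)..Real.pi / B * L ^ 3, saddleIntegrand f B β L v := by
  have hsubst := intervalIntegral.smul_integral_comp_mul_left
    (a := -(Real.pi / B * L ^ 3)) (b := Real.pi / B * L ^ 3)
    (fun θ : ℝ ↦ f (exp (-((B / L ^ 2 : ℝ) - I * θ))) * exp (n * ((B / L ^ 2 : ℝ) - I * θ)))
    (B / L ^ 3)
  rw [show B / L ^ 3 * -(Real.pi / B * L ^ 3) = -Real.pi by field_simp,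
    show B / L ^ 3 * (Real.pi / B * L ^ 3) = Real.pi by field_simp] at hsubst
  simp_rw [← saddlePath_eq_sub] at hsubst
  have hn' : (n : ℂ) = (L : ℂ) ^ 4 := by exact_mod_cast hn.symm
  have hL' : (L : ℂ) ≠ 0 := ofReal_ne_zero.2 hL.ne'
  have hrpow : L ^ (3 + 2 * β) = L ^ 3 * L ^ (2 * β) := by
    rw [Real.rpow_add hL, show (3 : ℝ) = (3 : ℕ) by norm_num, Real.rpow_natCast]
  rw [coeff_eq_integral hf ha (t := B / L ^ 2) (by positivity) n, ← hsubst, hn', hrpow, real_smul]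
  simp only [saddleIntegrand]
  rw [intervalIntegral.integral_const_mul]
  push_cast
  field_simp

theorem tendsto_coeff_mul_rpow_mul_exp (hf : DifferentiableOn ℂ f (Metric.ball 0 1))
    (ha : ∀ᶠ x : ℝ in 𝓝[>] 0, HasSum (fun n ↦ a n * (x : ℂ) ^ n) (f x)) (hB : 0 < B)
    {c : ℂ} {C δ : ℝ} (hC : 0 ≤ C) (hδ : 0 < δ)
    (hmajor : Tendsto (fun τ ↦ f (exp (-τ)) / (τ ^ (β : ℂ) * exp (B ^ 2 / τ))) (𝓝[rightCone] 0)
      (𝓝 c))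
    (hminor : ∀ᶠ t : ℝ in 𝓝[>] 0, ∀ θ : ℝ, t ≤ |θ| → |θ| ≤ Real.pi →
      ‖f (exp (-(t - I * θ)))‖ ≤ C * Real.exp ((B ^ 2 - δ) / t)) :
    Tendsto (fun n : ℕ ↦ a n * ((n : ℝ) ^ (3 / 4 + β / 2) * Real.exp (-(2 * B * √n)) : ℝ)) atTop
      (𝓝 (c * (B ^ (β + 1 / 2) / (2 * √Real.pi) : ℝ))) := by
  have hconst : B / (2 * Real.pi) * (B ^ β * √(Real.pi / B)) =
      B ^ (β + 1 / 2) / (2 * √Real.pi) := by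
    have hpi := Real.sq_sqrt Real.pi_pos.le
    have hsqrtB := Real.sq_sqrt hB.le
    rw [Real.rpow_add hB, ← Real.sqrt_eq_rpow, Real.sqrt_div Real.pi_pos.le]
    field_simp
    rw [hpi, hsqrtB, mul_comm]
  have hroot : Tendsto (fun n : ℕ ↦ √√(n : ℝ)) atTop atTop :=
    Real.tendsto_sqrt_atTop.comp (Real.tendsto_sqrt_atTop.comp tendsto_natCast_atTop_atTop)
  have hlim := ((tendsto_integral_saddleIntegrand hf hB hC hδ hmajor hminor).comp hroot).const_mul
    ((B / (2 * Real.pi) : ℝ) : ℂ)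
  rw [mul_left_comm, ← ofReal_mul, hconst] at hlim
  refine hlim.congr' ?_
  filter_upwards [eventually_gt_atTop 0] with n hn
  have hn' : (0 : ℝ) < n := Nat.cast_pos.2 hn
  have hsq : √√(n : ℝ) ^ 2 = √n := Real.sq_sqrt (Real.sqrt_nonneg _)
  have hfourth : √√(n : ℝ) ^ 4 = n := by
    rw [show 4 = 2 * 2 by rfl, pow_mul, hsq, Real.sq_sqrt hn'.le]
  have hrpow : √√(n : ℝ) ^ (3 + 2 * β) = (n : ℝ) ^ (3 / 4 + β / 2) := by
    rw [Real.sqrt_eq_rpow, Real.sqrt_eq_rpow, ← Real.rpow_mul hn'.le, ← Real.rpow_mul hn'.le]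
    ring_nf
  rw [Function.comp_apply, ← coeff_eq_integral_saddleIntegrand hf ha hB (by positivity) hfourth,
    hrpow, hsq]

end SaddlePoint

section ModularTransformation

open Complex Filter Topology

lemma eulerPhi_zero : eulerPhi (0 : ℂ) = 1 := by simp [eulerPhi]

lemma tendsto_eulerPhi_nhds_zero : Tendsto eulerPhi (𝓝 (0 : ℂ)) (𝓝 1) := by
  have hball : Metric.ball (0 : ℂ) 1 ∈ 𝓝 0 := Metric.ball_mem_nhds 0 one_pos
  simpa only [eulerPhi_zero] using
    (differentiableOn_eulerPhi.differentiableAt hball).continuousAt.tendsto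

lemma eta_I_mul_div (τ : ℂ) :
    ModularForm.eta (I * (τ / (2 * Real.pi))) = exp (-τ / 24) * eulerPhi (exp (-τ)) := by
  have hpi : (Real.pi : ℂ) ≠ 0 := ofReal_ne_zero.2 Real.pi_ne_zero
  have hexponent : 2 * Real.pi * I * (I * (τ / (2 * Real.pi))) = -τ := by
    field_simp
    linear_combination τ * I_sq
  simp only [ModularForm.eta, ModularForm.eta_q, Function.Periodic.qParam, hexponent, eulerPhi]
  simp

lemma sqrt_I_mul {w : ℂ} (hw : 0 < w.re) :
    Complex.sqrt (I * w) = Complex.sqrt I * w ^ (1 / 2 : ℂ) := by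
  have hw₀ : w ≠ 0 := fun h ↦ by simp [h] at hw
  have harg := abs_lt.1 (abs_arg_lt_pi_div_two_iff.2 (.inl hw))
  have hlog : log (I * w) = log I + log w := by
    refine log_mul I_ne_zero hw₀ ?_
    rw [arg_I]
    constructor <;> linarith
  simp only [Complex.sqrt, one_div]
  rw [cpow_def_of_ne_zero (mul_ne_zero I_ne_zero hw₀), cpow_def_of_ne_zero I_ne_zero,
    cpow_def_of_ne_zero hw₀, hlog, add_mul, exp_add]

lemma exp_mul_eulerPhi_exp_neg_inv {τ : ℂ} (hτ : 0 < τ.re) :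
    exp (-(Real.pi ^ 2 / (6 * τ))) * eulerPhi (exp (-(4 * Real.pi ^ 2 / τ))) =
      (τ / (2 * Real.pi)) ^ (1 / 2 : ℂ) * (exp (-τ / 24) * eulerPhi (exp (-τ))) := by
  have hpi : (Real.pi : ℂ) ≠ 0 := ofReal_ne_zero.2 Real.pi_ne_zero
  have hτ₀ : τ ≠ 0 := fun h ↦ by simp [h] at hτ
  have hw : 0 < (τ / (2 * Real.pi)).re := by
    rw [show (2 * Real.pi : ℂ) = (2 * Real.pi : ℝ) by push_cast; rfl, div_ofReal_re]
    positivity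
  have heta := ModularForm.eta_comp_eq_csqrt_I_inv (x := I * (τ / (2 * Real.pi)))
    (show 0 < (I * (τ / (2 * Real.pi))).im by simpa using hw)
  have hinv : -1 / (I * (τ / (2 * Real.pi))) = I * (4 * Real.pi ^ 2 / τ / (2 * Real.pi)) := by
    field_simp
    linear_combination (-(2 * 2 : ℂ)) * I_sq
  have hsqrt : Complex.sqrt I ≠ 0 := by simp [Complex.sqrt, cpow_eq_zero_iff]
  simp only [Function.comp_apply, Pi.smul_apply, Pi.mul_apply, smul_eq_mul, hinv, eta_I_mul_div,
    sqrt_I_mul hw] at heta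
  rw [mul_assoc (Complex.sqrt I), inv_mul_cancel_left₀ hsqrt] at heta
  rw [← heta]
  congr 2
  field_simp
  norm_num

lemma tendsto_re_inv_rightCone : Tendsto (fun τ : ℂ ↦ (τ⁻¹).re) (𝓝[rightCone] 0) atTop := by
  have hre : Tendsto (fun τ : ℂ ↦ τ.re) (𝓝[rightCone] 0) (𝓝[>] 0) :=
    tendsto_nhdsWithin_iff.2 ⟨(continuous_re.tendsto' 0 0 rfl).mono_left nhdsWithin_le_nhds,
      eventually_mem_nhdsWithin.mono fun τ hτ ↦ hτ.1⟩
  refine tendsto_atTop_mono' _ ?_ ((tendsto_inv_nhdsGT_zero.comp hre).atTop_div_const two_pos)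
  filter_upwards [self_mem_nhdsWithin] with τ ⟨hpos, him⟩
  have hsq : τ.im * τ.im ≤ τ.re * τ.re := by
    simpa only [abs_mul_abs_self] using mul_self_le_mul_self (abs_nonneg τ.im) him
  rw [Function.comp_apply, inv_re, normSq_apply, inv_eq_one_div, div_div,
    div_le_div_iff₀ (by positivity) (by nlinarith [mul_self_nonneg τ.im])]
  nlinarith

lemma tendsto_inv_eulerPhi_exp_neg :
    Tendsto (fun τ ↦ (eulerPhi (exp (-τ)))⁻¹ /
      ((τ / (2 * Real.pi)) ^ (1 / 2 : ℂ) * exp (Real.pi ^ 2 / (6 * τ)))) (𝓝[rightCone] 0)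
      (𝓝 1) := by
  have hdual : Tendsto (fun τ : ℂ ↦ exp (-(4 * Real.pi ^ 2 / τ))) (𝓝[rightCone] 0) (𝓝 0) := by
    refine tendsto_zero_iff_norm_tendsto_zero.2 ((Real.tendsto_exp_neg_atTop_nhds_zero.comp
      (tendsto_re_inv_rightCone.const_mul_atTop (show 0 < 4 * Real.pi ^ 2 by positivity))).congr
        fun τ ↦ ?_)
    rw [Function.comp_apply, norm_exp, neg_re, ← re_ofReal_mul, div_eq_mul_inv]
    push_cast
    rfl
  have hexp : Tendsto (fun τ ↦ exp (-τ / 24)) (𝓝[rightCone] 0) (𝓝 1) :=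
    Continuous.tendsto' (by fun_prop) 0 1 (by simp) |>.mono_left nhdsWithin_le_nhds
  have hprod := hexp.mul ((tendsto_eulerPhi_nhds_zero.comp hdual).inv₀ one_ne_zero)
  rw [inv_one, mul_one] at hprod
  refine hprod.congr' ?_
  filter_upwards [self_mem_nhdsWithin] with τ ⟨hpos, _⟩
  have htransf : eulerPhi (exp (-(4 * Real.pi ^ 2 / τ))) = exp (Real.pi ^ 2 / (6 * τ)) *
      ((τ / (2 * Real.pi)) ^ (1 / 2 : ℂ) * (exp (-τ / 24) * eulerPhi (exp (-τ)))) := by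
    rw [← exp_mul_eulerPhi_exp_neg_inv hpos, exp_neg (Real.pi ^ 2 / (6 * τ)),
      mul_inv_cancel_left₀ (exp_ne_zero _)]
  rw [Function.comp_apply, htransf]
  field_simp

/-- Half the growth rate of `stablePi`: the number `B` with `log (stableGF (exp (-t))) ∼ B ^ 2 / t`
as `t → 0`. -/
noncomputable def stableRate : ℝ := Real.pi * √(5 / 12)

lemma stableRate_pos : 0 < stableRate := mul_pos Real.pi_pos (Real.sqrt_pos.2 (by norm_num))

lemma stableRate_sq : stableRate ^ 2 = 5 * Real.pi ^ 2 / 12 := by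
  rw [stableRate, mul_pow, Real.sq_sqrt (by norm_num)]
  ring

lemma mul_div_pi_cpow_half {τ : ℂ} (hτ : τ ≠ 0) :
    τ * (τ / Real.pi) ^ (1 / 2 : ℂ) = τ ^ ((3 / 2 : ℝ) : ℂ) / (√Real.pi : ℝ) := by
  have hsqrt : ((Real.pi⁻¹ : ℝ) : ℂ) ^ (1 / 2 : ℂ) = ((√Real.pi)⁻¹ : ℝ) := by
    rw [← Real.sqrt_inv, Real.sqrt_eq_rpow, ofReal_cpow (by positivity)]
    push_cast
    rfl
  have hpow : τ ^ ((3 / 2 : ℝ) : ℂ) = τ * τ ^ (1 / 2 : ℂ) := by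
    rw [show ((3 / 2 : ℝ) : ℂ) = 1 + 1 / 2 by push_cast; norm_num, cpow_add _ _ hτ, cpow_one]
  rw [div_eq_inv_mul τ, ← ofReal_inv, ofReal_mul_cpow (by positivity) hτ, hsqrt, hpow, ofReal_inv]
  ring

lemma tendsto_stableGF_exp_neg :
    Tendsto (fun τ ↦ stableGF (exp (-τ)) /
      (τ ^ ((3 / 2 : ℝ) : ℂ) * exp (stableRate ^ 2 / τ))) (𝓝[rightCone] 0)
      (𝓝 ((2 * Real.pi * √Real.pi)⁻¹ : ℝ)) := by
  have hdouble : Tendsto (fun τ : ℂ ↦ 2 * τ) (𝓝[rightCone] 0) (𝓝[rightCone] 0) := by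
    refine tendsto_nhdsWithin_iff.2 ⟨(Continuous.tendsto' (by fun_prop) 0 0 (by simp)).mono_left
      nhdsWithin_le_nhds, ?_⟩
    filter_upwards [self_mem_nhdsWithin] with τ ⟨hpos, him⟩
    simpa [rightCone, abs_mul] using And.intro hpos him
  have hprod := ((tendsto_inv_eulerPhi_exp_neg.pow 2).mul
    (tendsto_inv_eulerPhi_exp_neg.comp hdouble)).mul_const (((2 * Real.pi * √Real.pi)⁻¹ : ℝ) : ℂ)
  rw [one_pow, one_mul, one_mul] at hprod
  refine hprod.congr' ?_
  filter_upwards [self_mem_nhdsWithin] with τ ⟨hpos, _⟩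
  have hτ₀ : τ ≠ 0 := fun h ↦ by simp [h] at hpos
  have hsq : exp (-τ) ^ 2 = exp (-(2 * τ)) := by
    rw [← exp_nat_mul]
    push_cast
    ring_nf
  have hhalf : ((τ / (2 * Real.pi)) ^ (1 / 2 : ℂ)) ^ 2 = τ / (2 * Real.pi) := by
    rw [← cpow_nat_mul]
    norm_num
  have hexp : exp (stableRate ^ 2 / τ) =
      exp (Real.pi ^ 2 / (6 * τ)) ^ 2 * exp (Real.pi ^ 2 / (6 * (2 * τ))) := by
    rw [← exp_nat_mul, ← exp_add, ← ofReal_pow, stableRate_sq]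
    push_cast
    congr 1
    field_simp
    norm_num
  have hpow : τ ^ ((3 / 2 : ℝ) : ℂ) = τ * (τ / Real.pi) ^ (1 / 2 : ℂ) * (√Real.pi : ℝ) := by
    rw [mul_div_pi_cpow_half hτ₀, div_mul_cancel₀ _ (by simp [Real.pi_pos.le, Real.pi_ne_zero])]
  rw [Function.comp_apply, stableGF, hsq, hexp, hpow, div_pow, mul_pow _ _ 2, hhalf,
    mul_div_mul_left _ _ two_ne_zero]
  push_cast
  field_simp

end ModularTransformation

section MinorArc

open Complex Filter Topology

lemma log_one_sub_norm_add_norm_le {z : ℂ} (hz : ‖z‖ < 1) :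
    Real.log (1 - ‖z‖) + ‖z‖ ≤ Real.log ‖1 - z‖ + z.re := by
  have hre := (hasSum_nat_add_iff' 2).2 (hasSum_re (hasSum_taylorSeries_neg_log hz))
  have hnorm := (hasSum_nat_add_iff' 1).2
    (Real.hasSum_pow_div_log_of_abs_lt_one (x := ‖z‖) (by simpa using hz))
  have hle := hasSum_le (fun n ↦ ?_) hre hnorm
  · simp only [sum_range_succ, range_zero, sum_empty, log_re, neg_re] at hle
    norm_num at hle
    linarith
  · rw [← ofReal_natCast, div_ofReal_re]
    push_cast
    rw [add_assoc, one_add_one_eq_two, add_assoc, one_add_one_eq_two]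
    gcongr
    exact (re_le_norm _).trans (norm_pow z (n + 2)).le

lemma one_sub_norm_mul_exp_le_norm_one_sub {z : ℂ} (hz : ‖z‖ < 1) :
    (1 - ‖z‖) * Real.exp (‖z‖ - z.re) ≤ ‖1 - z‖ := by
  have hne : 1 - z ≠ 0 := sub_ne_zero.2 fun h ↦ by simp [← h] at hz
  calc (1 - ‖z‖) * Real.exp (‖z‖ - z.re)
    _ = Real.exp (Real.log (1 - ‖z‖) + (‖z‖ - z.re)) := by
      rw [Real.exp_add, Real.exp_log (by linarith)]
    _ ≤ Real.exp (Real.log ‖1 - z‖) :=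
      Real.exp_le_exp.2 (by linarith [log_one_sub_norm_add_norm_le hz])
    _ = ‖1 - z‖ := Real.exp_log (norm_pos_iff.2 hne)

lemma eulerPhi_norm_mul_exp_le {q : ℂ} (hq : ‖q‖ < 1) :
    eulerPhi ‖q‖ * Real.exp (‖q‖ / (1 - ‖q‖) - (q / (1 - q)).re) ≤ ‖eulerPhi q‖ := by
  have hgeom := (((hasSum_geometric_of_lt_one (norm_nonneg q) hq).mul_left ‖q‖).sub
    (hasSum_re ((hasSum_geometric_of_norm_lt_one hq).mul_left q))).tendsto_sum_nat
  rw [← div_eq_mul_inv, ← div_eq_mul_inv] at hgeom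
  refine le_of_tendsto_of_tendsto' ((tendsto_prod_eulerPhi (q := ‖q‖) (by simpa using hq)).mul
    hgeom.rexp) (tendsto_prod_eulerPhi hq).norm fun N ↦ ?_
  rw [norm_prod, Real.exp_sum, ← prod_mul_distrib]
  have hpow (j : ℕ) : ‖q ^ (j + 1)‖ < 1 := by
    rw [norm_pow]
    exact pow_lt_one₀ (norm_nonneg q) hq j.succ_ne_zero
  simp only [← pow_succ', ← norm_pow _ (_ + 1)]
  exact Finset.prod_le_prod (fun j _ ↦ mul_nonneg (sub_nonneg.2 (hpow j).le) (Real.exp_pos _).le)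
    fun j _ ↦ one_sub_norm_mul_exp_le_norm_one_sub (hpow j)

lemma re_div_one_sub_le (q : ℂ) : (q / (1 - q)).re ≤ ‖q‖ / ‖1 - q‖ := by
  rw [← norm_div]
  exact re_le_norm _

lemma eulerPhi_norm_le_norm_eulerPhi {q : ℂ} (hq : ‖q‖ < 1) :
    eulerPhi ‖q‖ ≤ ‖eulerPhi q‖ := by
  have hsub : 1 - ‖q‖ ≤ ‖1 - q‖ := by simpa using norm_sub_norm_le (1 : ℂ) q
  have hgain : (q / (1 - q)).re ≤ ‖q‖ / (1 - ‖q‖) :=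
    (re_div_one_sub_le q).trans
      (div_le_div_of_nonneg_left (norm_nonneg q) (sub_pos.2 hq) hsub)
  exact (le_mul_of_one_le_right (eulerPhi_pos (by simpa using hq)).le
    (Real.one_le_exp (sub_nonneg.2 hgain))).trans (eulerPhi_norm_mul_exp_le hq)

lemma norm_exp_neg_sub_I_mul (t θ : ℝ) : ‖exp (-(t - I * θ))‖ = Real.exp (-t) := by
  simp [norm_exp]

lemma norm_one_sub_exp_sq (t θ : ℝ) :
    ‖1 - exp (-(t - I * θ))‖ ^ 2 =
      (1 - Real.exp (-t)) ^ 2 + 2 * Real.exp (-t) * (1 - Real.cos θ) := by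
  rw [← normSq_eq_norm_sq, normSq_apply, sub_re, sub_im, one_re, one_im, exp_re, exp_im]
  simp only [neg_re, sub_re, ofReal_re, mul_re, I_re, zero_mul, I_im, ofReal_im, mul_zero, sub_self,
    sub_zero, neg_im, sub_im, mul_im, one_mul, zero_add, zero_sub, neg_neg]
  linear_combination Real.exp (-t) ^ 2 * Real.sin_sq_add_cos_sq θ

lemma mul_one_sub_exp_le_norm_one_sub_exp {t θ : ℝ} (ht : 0 < t) (hr : 1 / 2 ≤ Real.exp (-t))
    (hθ : t ≤ |θ|) (hθ' : |θ| ≤ Real.pi) :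
    13 / 12 * (1 - Real.exp (-t)) ≤ ‖1 - exp (-(t - I * θ))‖ := by
  have hone_sub : 1 - Real.exp (-t) ≤ |θ| := by linarith [Real.add_one_le_exp (-t)]
  have hone_sub_pos : 0 < 1 - Real.exp (-t) := by simpa using ht
  have hcos : 1 / 5 * (1 - Real.exp (-t)) ^ 2 ≤ 1 - Real.cos θ := by
    have hpi : 1 / 5 ≤ 2 / Real.pi ^ 2 := by
      rw [div_le_div_iff₀ (by norm_num) (by positivity)]
      nlinarith [Real.pi_lt_d2, Real.pi_pos]
    calc 1 / 5 * (1 - Real.exp (-t)) ^ 2 ≤ 2 / Real.pi ^ 2 * |θ| ^ 2 := by gcongr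
      _ ≤ 1 - Real.cos θ := by
        rw [sq_abs]
        linarith [Real.cos_le_one_sub_mul_cos_sq hθ']
  refine le_of_sq_le_sq ?_ (norm_nonneg _)
  rw [norm_one_sub_exp_sq]
  nlinarith [sq_nonneg (1 - Real.exp (-t))]

lemma eulerPhi_mul_exp_le_norm_eulerPhi {t θ : ℝ} (ht : 0 < t) (hr : 1 / 2 ≤ Real.exp (-t))
    (hθ : t ≤ |θ|) (hθ' : |θ| ≤ Real.pi) :
    eulerPhi (Real.exp (-t)) * Real.exp (1 / (26 * t)) ≤ ‖eulerPhi (exp (-(t - I * θ)))‖ := by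
  set q := exp (-(t - I * θ))
  set r := Real.exp (-t)
  have hnorm : ‖q‖ = r := norm_exp_neg_sub_I_mul t θ
  have hr_lt : 0 < 1 - r := by simpa [r] using ht
  have hlower := eulerPhi_norm_mul_exp_le (q := q) (by linarith)
  rw [hnorm] at hlower
  refine le_trans ?_ hlower
  have hφ : 0 < eulerPhi r := eulerPhi_pos (by rw [← hnorm, norm_norm]; linarith)
  have hre : (q / (1 - q)).re ≤ 12 / 13 * (r / (1 - r)) := by
    calc (q / (1 - q)).re ≤ r / ‖1 - q‖ := hnorm ▸ re_div_one_sub_le q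
      _ ≤ r / (13 / 12 * (1 - r)) := by
        gcongr
        exact mul_one_sub_exp_le_norm_one_sub_exp ht hr hθ hθ'
      _ = 12 / 13 * (r / (1 - r)) := by field_simp
  have hratio : 1 / 2 / t ≤ r / (1 - r) := by
    gcongr
    linarith [Real.add_one_le_exp (-t)]
  gcongr
  calc 1 / (26 * t) = 1 / 13 * (1 / 2 / t) := by ring
    _ ≤ 1 / 13 * (r / (1 - r)) := by gcongr
    _ ≤ r / (1 - r) - (q / (1 - q)).re := by linarith

lemma norm_stableGF_le {t θ : ℝ} (ht : 0 < t) (hr : 1 / 2 ≤ Real.exp (-t)) (hθ : t ≤ |θ|)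
    (hθ' : |θ| ≤ Real.pi) :
    ‖stableGF (exp (-(t - I * θ)))‖ ≤ stableGF (Real.exp (-t)) * Real.exp (-(1 / 13) / t) := by
  set q := exp (-(t - I * θ))
  set r := Real.exp (-t)
  have hnorm : ‖q‖ = r := norm_exp_neg_sub_I_mul t θ
  have hr_lt : ‖r‖ < 1 := by simpa [r] using ht
  have hφ := eulerPhi_pos hr_lt
  have hφ_sq := eulerPhi_pos (norm_sq_lt_one hr_lt)
  have hq_lower : eulerPhi r * Real.exp (1 / (26 * t)) ≤ ‖eulerPhi q‖ :=
    eulerPhi_mul_exp_le_norm_eulerPhi ht hr hθ hθ'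
  have hq_sq_lower : eulerPhi (r ^ 2) ≤ ‖eulerPhi (q ^ 2)‖ := by
    have h := eulerPhi_norm_le_norm_eulerPhi (q := q ^ 2)
      (norm_sq_lt_one (hnorm ▸ (Real.le_norm_self r).trans_lt hr_lt))
    rwa [norm_pow, hnorm] at h
  calc ‖stableGF q‖ = ‖eulerPhi q‖⁻¹ ^ 2 * ‖eulerPhi (q ^ 2)‖⁻¹ := by
        rw [stableGF, norm_mul, norm_pow, norm_inv, norm_inv]
    _ ≤ (eulerPhi r * Real.exp (1 / (26 * t)))⁻¹ ^ 2 * (eulerPhi (r ^ 2))⁻¹ := by gcongr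
    _ = stableGF r * Real.exp (-(1 / 13) / t) := by
      rw [mul_inv, ← Real.exp_neg, mul_pow, ← Real.exp_nat_mul, stableGF,
        show ((2 : ℕ) : ℝ) * -(1 / (26 * t)) = -(1 / 13) / t by push_cast; ring]
      ring

lemma eventually_stableGF_exp_neg_le :
    ∃ C, 0 ≤ C ∧ ∀ᶠ t in 𝓝[>] (0 : ℝ),
      stableGF (Real.exp (-t)) ≤ C * Real.exp (stableRate ^ 2 / t) := by
  set c := (2 * Real.pi * √Real.pi)⁻¹
  have hofReal : Tendsto (fun t : ℝ ↦ (t : ℂ)) (𝓝[>] 0) (𝓝[rightCone] 0) := by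
    refine tendsto_nhdsWithin_iff.2 ⟨(continuous_ofReal.tendsto' 0 0 rfl).mono_left
      nhdsWithin_le_nhds, ?_⟩
    filter_upwards [self_mem_nhdsWithin] with t ht
    exact ⟨ht, by simpa using (Set.mem_Ioi.1 ht).le⟩
  refine ⟨‖(c : ℂ)‖ + 1, by positivity, ?_⟩
  filter_upwards [(tendsto_stableGF_exp_neg.comp hofReal).norm.eventually_le_const (lt_add_one _),
    Ioo_mem_nhdsGT one_pos] with t hbound ⟨ht, ht₁⟩
  have hr : ‖Real.exp (-t)‖ < 1 := by simpa using ht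
  have hpow : t ^ (3 / 2 : ℝ) ≤ 1 := Real.rpow_le_one ht.le ht₁.le (by norm_num)
  have hcast : stableGF (exp (-(t : ℂ))) / ((t : ℂ) ^ ((3 / 2 : ℝ) : ℂ) *
      exp (stableRate ^ 2 / t)) = ((stableGF (Real.exp (-t)) /
        (t ^ (3 / 2 : ℝ) * Real.exp (stableRate ^ 2 / t)) : ℝ) : ℂ) := by
    rw [← ofReal_neg, ← ofReal_exp, stableGF_ofReal hr, ← ofReal_cpow ht.le]
    push_cast
    rfl
  rw [Function.comp_apply, hcast, norm_real, Real.norm_of_nonneg (div_nonneg (stableGF_pos hr).le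
    (by positivity)), div_le_iff₀ (by positivity)] at hbound
  refine hbound.trans ?_
  gcongr
  exact mul_le_of_le_one_left (Real.exp_pos _).le hpow

theorem tendsto_stablePi_mul_rpow_mul_exp :
    Tendsto (fun n : ℕ ↦ (stablePi n : ℝ) * ((n : ℝ) ^ (3 / 2 : ℝ) *
      Real.exp (-(2 * stableRate * √n)))) atTop (𝓝 (5 / 48)) := by
  obtain ⟨C, hC, hbound⟩ := eventually_stableGF_exp_neg_le
  have hhalf : ∀ᶠ t in 𝓝[>] (0 : ℝ), 1 / 2 ≤ Real.exp (-t) := by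
    have hexp : Tendsto (fun t ↦ Real.exp (-t)) (𝓝[>] 0) (𝓝 1) :=
      (Continuous.tendsto' (by fun_prop) 0 1 (by simp)).mono_left nhdsWithin_le_nhds
    exact hexp.eventually_const_le (by norm_num)
  have hminor : ∀ᶠ t : ℝ in 𝓝[>] 0, ∀ θ : ℝ, t ≤ |θ| → |θ| ≤ Real.pi →
      ‖stableGF (exp (-(t - I * θ)))‖ ≤ C * Real.exp ((stableRate ^ 2 - 1 / 13) / t) := by
    filter_upwards [hbound, hhalf, self_mem_nhdsWithin] with t hbound hr ht θ hθ hθ'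
    calc ‖stableGF (exp (-(t - I * θ)))‖
      _ ≤ stableGF (Real.exp (-t)) * Real.exp (-(1 / 13) / t) := norm_stableGF_le ht hr hθ hθ'
      _ ≤ C * Real.exp (stableRate ^ 2 / t) * Real.exp (-(1 / 13) / t) := by gcongr
      _ = C * Real.exp ((stableRate ^ 2 - 1 / 13) / t) := by
        rw [mul_assoc, ← Real.exp_add]
        ring_nf
  have hconst : (2 * Real.pi * √Real.pi)⁻¹ *
      (stableRate ^ ((3 / 2 : ℝ) + 1 / 2) / (2 * √Real.pi)) = 5 / 48 := by
    have hpi := Real.sq_sqrt Real.pi_pos.le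
    rw [show (3 / 2 : ℝ) + 1 / 2 = (2 : ℕ) by norm_num, Real.rpow_natCast, stableRate_sq]
    field_simp
    rw [hpi]
    ring
  have hcoeff := tendsto_coeff_mul_rpow_mul_exp differentiableOn_stableGF hasSum_stablePi
    stableRate_pos hC (by norm_num) tendsto_stableGF_exp_neg hminor
  rw [← ofReal_mul, hconst, show (3 / 4 + 3 / 2 / 2 : ℝ) = 3 / 2 by norm_num] at hcoeff
  exact tendsto_ofReal_iff.1 (mod_cast hcoeff)

end MinorArc

section SubDivRatio

open Filter Topology

variable {ι : Type*} {l : Filter ι} {n j : ι → ℕ} {x : ℝ}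

lemma tendsto_sqrt_natCast_atTop (hn : Tendsto n l atTop) :
    Tendsto (fun i ↦ √(n i : ℝ)) l atTop :=
  Real.tendsto_sqrt_atTop.comp (tendsto_natCast_atTop_atTop.comp hn)

lemma tendsto_div_of_tendsto_div_sqrt (hn : Tendsto n l atTop)
    (hj : Tendsto (fun i ↦ (j i : ℝ) / √(n i)) l (𝓝 x)) :
    Tendsto (fun i ↦ (j i : ℝ) / n i) l (𝓝 0) := by
  refine (hj.div_atTop (tendsto_sqrt_natCast_atTop hn)).congr fun i ↦ ?_
  rw [div_div, Real.mul_self_sqrt (by positivity)]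

lemma eventually_lt_of_tendsto_div_sqrt (hn : Tendsto n l atTop)
    (hj : Tendsto (fun i ↦ (j i : ℝ) / √(n i)) l (𝓝 x)) : ∀ᶠ i in l, j i < n i := by
  filter_upwards [(tendsto_div_of_tendsto_div_sqrt hn hj).eventually_lt_const one_pos,
    hn.eventually_gt_atTop 0] with i hlt hpos
  exact_mod_cast (div_lt_one (by positivity)).1 hlt

lemma tendsto_sub_div_self (hn : Tendsto n l atTop)
    (hj : Tendsto (fun i ↦ (j i : ℝ) / √(n i)) l (𝓝 x)) :
    Tendsto (fun i ↦ ((n i - j i : ℕ) : ℝ) / n i) l (𝓝 1) := by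
  have hone_sub := (tendsto_div_of_tendsto_div_sqrt hn hj).const_sub 1
  rw [sub_zero] at hone_sub
  refine hone_sub.congr' ?_
  filter_upwards [eventually_lt_of_tendsto_div_sqrt hn hj] with i hlt
  rw [Nat.cast_sub hlt.le, sub_div, div_self (mod_cast hlt.ne_bot)]

lemma tendsto_sub_atTop (hn : Tendsto n l atTop)
    (hj : Tendsto (fun i ↦ (j i : ℝ) / √(n i)) l (𝓝 x)) :
    Tendsto (fun i ↦ n i - j i) l atTop := by
  refine tendsto_natCast_atTop_iff.1 (((tendsto_natCast_atTop_atTop.comp hn).atTop_mul_pos one_pos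
    (tendsto_sub_div_self hn hj)).congr' ?_)
  filter_upwards [hn.eventually_gt_atTop 0] with i hpos
  exact mul_div_cancel₀ _ (Nat.cast_ne_zero.2 hpos.ne')

lemma tendsto_sqrt_sub_sqrt_sub (hn : Tendsto n l atTop)
    (hj : Tendsto (fun i ↦ (j i : ℝ) / √(n i)) l (𝓝 x)) :
    Tendsto (fun i ↦ √(n i : ℝ) - √(n i - j i : ℕ)) l (𝓝 (x / 2)) := by
  have hdenom := (tendsto_sub_div_self hn hj).sqrt.const_add 1
  rw [Real.sqrt_one, one_add_one_eq_two] at hdenom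
  refine (hj.div hdenom two_ne_zero).congr' ?_
  filter_upwards [eventually_lt_of_tendsto_div_sqrt hn hj] with i hlt
  have hn_pos : 0 < √(n i : ℝ) := Real.sqrt_pos.2 (mod_cast hlt.pos)
  have hsub : (j i : ℝ) = √(n i : ℝ) ^ 2 - √(n i - j i : ℕ) ^ 2 := by
    rw [Real.sq_sqrt (by positivity), Real.sq_sqrt (by positivity), Nat.cast_sub hlt.le,
      sub_sub_cancel]
  rw [Pi.div_apply, Real.sqrt_div (by positivity), hsub]
  field_simp
  ring

lemma tendsto_div_sqrt_sub {k : ι → ℕ} {y : ℝ} (hn : Tendsto n l atTop)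
    (hj : Tendsto (fun i ↦ (j i : ℝ) / √(n i)) l (𝓝 x))
    (hk : Tendsto (fun i ↦ (k i : ℝ) / √(n i)) l (𝓝 y)) :
    Tendsto (fun i ↦ (k i : ℝ) / √(n i - j i : ℕ)) l (𝓝 y) := by
  have hquot := hk.div (tendsto_sub_div_self hn hj).sqrt (by simp)
  rw [Real.sqrt_one, div_one] at hquot
  refine hquot.congr' ?_
  filter_upwards [hn.eventually_gt_atTop 0] with i hpos
  rw [Pi.div_apply, Real.sqrt_div (by positivity), div_div_div_cancel_right₀ (by positivity)]

lemma tendsto_succ_div_sqrt (hn : Tendsto n l atTop)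
    (hj : Tendsto (fun i ↦ (j i : ℝ) / √(n i)) l (𝓝 x)) :
    Tendsto (fun i ↦ ((j i + 1 : ℕ) : ℝ) / √(n i)) l (𝓝 x) := by
  have hone := (tendsto_sqrt_natCast_atTop hn).const_div_atTop 1
  have hsum := hj.add hone
  rw [add_zero] at hsum
  refine hsum.congr fun i ↦ ?_
  rw [← add_div, Nat.cast_succ]

variable {a : ℕ → ℝ} {B κ C : ℝ}

lemma eventually_ne_zero_of_tendsto_mul_rpow_mul_exp
    (ha : Tendsto (fun n : ℕ ↦ a n * ((n : ℝ) ^ κ * Real.exp (-(2 * B * √n)))) atTop (𝓝 C))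
    (hC : C ≠ 0) : ∀ᶠ n in atTop, a n ≠ 0 :=
  (ha.eventually_ne hC).mono fun _ ↦ left_ne_zero_of_mul

lemma tendsto_apply_sub_div_apply
    (ha : Tendsto (fun n : ℕ ↦ a n * ((n : ℝ) ^ κ * Real.exp (-(2 * B * √n)))) atTop (𝓝 C))
    (hC : C ≠ 0) (hn : Tendsto n l atTop)
    (hj : Tendsto (fun i ↦ (j i : ℝ) / √(n i)) l (𝓝 x)) :
    Tendsto (fun i ↦ a (n i - j i) / a (n i)) l (𝓝 (Real.exp (-(B * x)))) := by
  have hm := tendsto_sub_atTop hn hj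
  have hnormalized := (ha.comp hm).div (ha.comp hn) hC
  have hpow := (tendsto_sub_div_self hn hj).rpow_const (p := -κ) (.inl one_ne_zero)
  have hexp := ((tendsto_sqrt_sub_sqrt_sub hn hj).const_mul (-(2 * B))).rexp
  have hprod := (hnormalized.mul hpow).mul hexp
  rw [div_self hC, Real.one_rpow, one_mul, one_mul,
    show -(2 * B) * (x / 2) = -(B * x) by ring] at hprod
  refine hprod.congr' ?_
  filter_upwards [hn.eventually_gt_atTop 0, hm.eventually_gt_atTop 0] with i hn_pos hm_pos
  have hsplit : Real.exp (-(2 * B) * (√(n i : ℝ) - √(n i - j i : ℕ))) =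
      Real.exp (-(2 * B * √(n i))) / Real.exp (-(2 * B * √(n i - j i : ℕ))) := by
    rw [← Real.exp_sub]
    ring_nf
  rw [hsplit, Real.rpow_neg (by positivity), Real.div_rpow (by positivity) (by positivity)]
  simp only [Pi.div_apply, Function.comp_apply]
  field_simp

lemma tendsto_apply_sub_div_apply_zero
    (ha : Tendsto (fun n : ℕ ↦ a n * ((n : ℝ) ^ κ * Real.exp (-(2 * B * √n)))) atTop (𝓝 C))
    (hC : C ≠ 0) (hmono : Monotone a) (ha₀ : 0 ≤ a 0) (hB : 0 < B) (hn : Tendsto n l atTop)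
    (hj : Tendsto (fun i ↦ (j i : ℝ) / √(n i)) l atTop) :
    Tendsto (fun i ↦ a (n i - j i) / a (n i)) l (𝓝 0) := by
  have hnonneg (m : ℕ) : 0 ≤ a m := ha₀.trans (hmono m.zero_le)
  refine tendsto_order.2 ⟨fun b hb ↦ .of_forall fun i ↦
    hb.trans_le (div_nonneg (hnonneg _) (hnonneg _)), fun ε hε ↦ ?_⟩
  have hexp : Tendsto (fun M : ℝ ↦ Real.exp (-(B * M))) atTop (𝓝 0) :=
    Real.tendsto_exp_neg_atTop_nhds_zero.comp (tendsto_id.const_mul_atTop hB)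
  obtain ⟨M, hMε, hM₀⟩ := ((hexp.eventually_lt_const hε).and (eventually_ge_atTop 0)).exists
  have hfloor : Tendsto (fun i ↦ (⌊M * √(n i)⌋₊ : ℝ) / √(n i)) l (𝓝 M) :=
    (tendsto_nat_floor_mul_div_atTop hM₀).comp (tendsto_sqrt_natCast_atTop hn)
  filter_upwards [(tendsto_apply_sub_div_apply ha hC hn hfloor).eventually_lt_const hMε,
    hj.eventually_ge_atTop M, hn.eventually_gt_atTop 0] with i hlt hMj hpos
  have hfloor_le : ⌊M * √(n i)⌋₊ ≤ j i :=
    Nat.floor_le_of_le ((le_div_iff₀ (Real.sqrt_pos.2 (mod_cast hpos))).1 hMj)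
  exact (div_le_div_of_nonneg_right (hmono (Nat.sub_le_sub_left hfloor_le _))
    (hnonneg _)).trans_lt hlt

end SubDivRatio

section StableRatio

open Filter Topology ENNReal

/-- The proportion of its upper bound `stablePi n` that `bipartitePi (n + k) n` attains. -/
noncomputable def stableRatio (k n : ℕ) : ℝ := bipartitePi (n + k) n / stablePi n

lemma stableRatio_nonneg (k n : ℕ) : 0 ≤ stableRatio k n := by
  unfold stableRatio
  positivity

lemma stableRatio_le_one (k n : ℕ) : stableRatio k n ≤ 1 :=
  div_le_one_of_le₀ (mod_cast bipartitePi_add_le_stablePi k n) (Nat.cast_nonneg _)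

lemma stableRatio_eq_one_sub {k n : ℕ} (hk : k + 1 ≤ n) (hn : stablePi n ≠ 0)
    (hsub : stablePi (n - (k + 1)) ≠ 0) :
    stableRatio k n =
      1 - stablePi (n - (k + 1)) / stablePi n * stableRatio (k + 1) (n - (k + 1)) := by
  have hrec : (stablePi n : ℝ) = bipartitePi (n + k) n + bipartitePi n (n - (k + 1)) :=
    mod_cast (bipartitePi_add_bipartitePi_eq_stablePi hk).symm
  rw [stableRatio, stableRatio, Nat.sub_add_cancel hk, div_mul_div_comm,
    mul_comm _ (stablePi (n - (k + 1)) : ℝ), mul_div_mul_left _ _ (mod_cast hsub),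
    eq_sub_iff_add_eq, ← add_div, ← hrec, div_self (mod_cast hn)]

lemma one_sub_div_le_stableRatio {k n : ℕ} (hn : stablePi n ≠ 0) :
    1 - stablePi (n - (k + 1)) / stablePi n ≤ stableRatio k n := by
  have hle : stablePi n ≤ bipartitePi (n + k) n + stablePi (n - (k + 1)) := by
    rcases le_or_gt (k + 1) n with hk | hk
    · rw [← bipartitePi_add_bipartitePi_eq_stablePi hk]
      have h := bipartitePi_add_le_stablePi (k + 1) (n - (k + 1))
      rw [Nat.sub_add_cancel hk] at h
      lia
    · rw [bipartitePi_add_eq_stablePi (Nat.lt_succ_iff.1 hk)]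
      exact Nat.le_add_right _ _
  rw [stableRatio, sub_le_iff_le_add, ← add_div, one_le_div (by positivity)]
  exact_mod_cast hle

variable {ι : Type*} {l : Filter ι} {k n : ι → ℕ} {x : ℝ}

lemma tendsto_stablePi_sub_div {j : ι → ℕ} (hn : Tendsto n l atTop)
    (hj : Tendsto (fun i ↦ (j i : ℝ) / √(n i)) l (𝓝 x)) :
    Tendsto (fun i ↦ (stablePi (n i - j i) / stablePi (n i) : ℝ)) l
      (𝓝 (Real.exp (-(stableRate * x)))) :=
  tendsto_apply_sub_div_apply (a := fun n ↦ stablePi n) tendsto_stablePi_mul_rpow_mul_exp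
    (by norm_num) hn hj

lemma eventually_stablePi_ne_zero : ∀ᶠ n in atTop, stablePi n ≠ 0 :=
  (eventually_ne_zero_of_tendsto_mul_rpow_mul_exp (a := fun n ↦ stablePi n)
    tendsto_stablePi_mul_rpow_mul_exp (by norm_num)).mono fun _ ↦ Nat.cast_ne_zero.1

lemma abs_one_sub_mul_sub_inv_le {r ρ s : ℝ} (hr : 0 < r) (hs : |s| ≤ 1) :
    |1 - ρ * s - (1 + r)⁻¹| ≤ r * |s - (1 + r)⁻¹| + |ρ - r| := by
  have hsplit : 1 - ρ * s - (1 + r)⁻¹ = -(r * (s - (1 + r)⁻¹)) - (ρ - r) * s := by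
    field_simp
    ring
  calc |1 - ρ * s - (1 + r)⁻¹| ≤ |-(r * (s - (1 + r)⁻¹))| + |(ρ - r) * s| := hsplit ▸ abs_sub _ _
    _ ≤ r * |s - (1 + r)⁻¹| + |ρ - r| := by
      rw [abs_neg, abs_mul, abs_mul, abs_of_pos hr]
      gcongr
      exact mul_le_of_le_one_right (abs_nonneg _) hs

-- Each use of the recurrence contracts the distance to the fixed point `(1 + r)⁻¹` of
-- `y ↦ 1 - r * y` by the factor `r = exp (-(stableRate * x))`.
lemma eventually_abs_stableRatio_sub_le (hx : 0 ≤ x) (M : ℕ) (hn : Tendsto n l atTop)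
    (hk : Tendsto (fun i ↦ (k i : ℝ) / √(n i)) l (𝓝 x)) {ε : ℝ} (hε : 0 < ε) :
    ∀ᶠ i in l, |stableRatio (k i) (n i) - (1 + Real.exp (-(stableRate * x)))⁻¹| ≤
      Real.exp (-(stableRate * x)) ^ M + ε := by
  set r := Real.exp (-(stableRate * x))
  have hr₀ : 0 < r := Real.exp_pos _
  have hr₁ : r ≤ 1 := Real.exp_le_one_iff.2 (neg_nonpos.2 (mul_nonneg stableRate_pos.le hx))
  induction M generalizing k n ε with
  | zero =>
    refine .of_forall fun i ↦ abs_le.2 ⟨?_, ?_⟩ <;>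
    linarith [stableRatio_nonneg (k i) (n i), stableRatio_le_one (k i) (n i),
      inv_le_one_of_one_le₀ (show 1 ≤ 1 + r by linarith), inv_pos.2 (show 0 < 1 + r by linarith)]
  | succ M ih =>
    have hk_succ := tendsto_succ_div_sqrt hn hk
    have hsub := tendsto_sub_atTop hn hk_succ
    have hrec := ih hsub (tendsto_div_sqrt_sub hn hk_succ hk_succ) (half_pos hε)
    have hρ := Metric.tendsto_nhds.1 (tendsto_stablePi_sub_div hn hk_succ) (ε / 2) (half_pos hε)
    filter_upwards [hrec, hρ, eventually_lt_of_tendsto_div_sqrt hn hk_succ,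
      hn.eventually eventually_stablePi_ne_zero, hsub.eventually eventually_stablePi_ne_zero]
      with i hrec hρ hlt hne hne_sub
    rw [stableRatio_eq_one_sub hlt.le hne hne_sub]
    calc _ ≤ r * (r ^ M + ε / 2) + ε / 2 := by
          refine (abs_one_sub_mul_sub_inv_le hr₀ ?_).trans (add_le_add (by gcongr) hρ.le)
          rw [abs_of_nonneg (stableRatio_nonneg _ _)]
          exact stableRatio_le_one _ _
      _ ≤ r ^ (M + 1) + ε := by
          rw [pow_succ']
          nlinarith

lemma tendsto_stableRatio_of_pos (hx : 0 < x) (hn : Tendsto n l atTop)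
    (hk : Tendsto (fun i ↦ (k i : ℝ) / √(n i)) l (𝓝 x)) :
    Tendsto (fun i ↦ stableRatio (k i) (n i)) l (𝓝 (1 + Real.exp (-(stableRate * x)))⁻¹) := by
  refine Metric.tendsto_nhds.2 fun ε hε ↦ ?_
  have hr : Real.exp (-(stableRate * x)) < 1 :=
    Real.exp_lt_one_iff.2 (neg_neg_of_pos (mul_pos stableRate_pos hx))
  obtain ⟨M, hM⟩ := exists_pow_lt_of_lt_one (half_pos hε) hr
  filter_upwards [eventually_abs_stableRatio_sub_le hx.le M hn hk (half_pos hε)] with i hi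
  rw [Real.dist_eq]
  linarith

lemma tendsto_stableRatio_of_tendsto_zero (hn : Tendsto n l atTop)
    (hk : Tendsto (fun i ↦ (k i : ℝ) / √(n i)) l (𝓝 0)) :
    Tendsto (fun i ↦ stableRatio (k i) (n i)) l (𝓝 (1 / 2)) := by
  have hsum : Tendsto (fun i ↦ n i + (k i + 1)) l atTop :=
    tendsto_atTop_mono (fun i ↦ Nat.le_add_right _ _) hn
  have hk_sum : Tendsto (fun i ↦ ((k i + 1 : ℕ) : ℝ) / √(n i + (k i + 1) : ℕ)) l (𝓝 0) := by
    refine squeeze_zero' (.of_forall fun i ↦ by positivity) ?_ (tendsto_succ_div_sqrt hn hk)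
    filter_upwards [hn.eventually_gt_atTop 0] with i hpos
    gcongr
    exact Nat.le_add_right _ _
  have hratio := ((tendsto_stablePi_sub_div hsum hk_sum).inv₀ (Real.exp_ne_zero _)).div_const 2
  simp only [mul_zero, neg_zero, Real.exp_zero, inv_one, Nat.add_sub_cancel, inv_div] at hratio
  refine tendsto_of_tendsto_of_tendsto_of_le_of_le' tendsto_const_nhds hratio ?_ ?_
  · filter_upwards [hn.eventually eventually_stablePi_ne_zero] with i hne
    have hle : (stablePi (n i) : ℝ) ≤ 2 * bipartitePi (n i + k i) (n i) :=
      mod_cast stablePi_le_two_mul_bipartitePi (k i) (n i)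
    rw [stableRatio, div_le_div_iff₀ two_pos (by positivity)]
    linarith
  · refine .of_forall fun i ↦ ?_
    have hle : 2 * bipartitePi (n i + k i) (n i) ≤ (stablePi (n i + (k i + 1)) : ℝ) :=
      mod_cast two_mul_bipartitePi_le_stablePi (k i) (n i)
    rw [stableRatio, div_right_comm]
    gcongr
    linarith

lemma tendsto_stableRatio_of_tendsto_atTop (hn : Tendsto n l atTop)
    (hk : Tendsto (fun i ↦ (k i : ℝ) / √(n i)) l atTop) :
    Tendsto (fun i ↦ stableRatio (k i) (n i)) l (𝓝 1) := by
  have hk_succ : Tendsto (fun i ↦ ((k i + 1 : ℕ) : ℝ) / √(n i)) l atTop :=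
    tendsto_atTop_mono (fun i ↦ by gcongr; exact Nat.le_succ _) hk
  have hratio := (tendsto_apply_sub_div_apply_zero (a := fun n ↦ stablePi n)
    tendsto_stablePi_mul_rpow_mul_exp (by norm_num) (Nat.mono_cast.comp monotone_stablePi)
    (Nat.cast_nonneg _) stableRate_pos hn hk_succ).const_sub 1
  rw [sub_zero] at hratio
  refine tendsto_of_tendsto_of_tendsto_of_le_of_le' hratio tendsto_const_nhds ?_
    (.of_forall fun i ↦ stableRatio_le_one _ _)
  exact (hn.eventually eventually_stablePi_ne_zero).mono fun i ↦ one_sub_div_le_stableRatio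

lemma tendsto_stableRatio_mul_of_tendsto_nhds (hx : 0 ≤ x) (hn : Tendsto n l atTop)
    (hk : Tendsto (fun i ↦ (k i : ℝ) / √(n i)) l (𝓝 x)) :
    Tendsto (fun i ↦ stableRatio (k i) (n i) *
      (1 + Real.exp (-(stableRate * (k i / √(n i)))))) l (𝓝 1) := by
  have hratio : Tendsto (fun i ↦ stableRatio (k i) (n i)) l
      (𝓝 (1 + Real.exp (-(stableRate * x)))⁻¹) := by
    rcases hx.eq_or_lt with rfl | hx
    · simpa [one_add_one_eq_two] using tendsto_stableRatio_of_tendsto_zero hn hk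
    · exact tendsto_stableRatio_of_pos hx hn hk
  have hprod := hratio.mul ((hk.const_mul stableRate).neg.rexp.const_add 1)
  rwa [inv_mul_cancel₀ (by positivity)] at hprod

lemma tendsto_stableRatio_mul_of_tendsto_atTop (hn : Tendsto n l atTop)
    (hk : Tendsto (fun i ↦ (k i : ℝ) / √(n i)) l atTop) :
    Tendsto (fun i ↦ stableRatio (k i) (n i) *
      (1 + Real.exp (-(stableRate * (k i / √(n i)))))) l (𝓝 1) := by
  have hexp := Real.tendsto_exp_neg_atTop_nhds_zero.comp (hk.const_mul_atTop stableRate_pos)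
  have hprod := (tendsto_stableRatio_of_tendsto_atTop hn hk).mul (hexp.const_add 1)
  rwa [add_zero, mul_one] at hprod

-- Uniformity in `k` comes from compactness: along an ultrafilter, `k / √n` converges in `[0, ∞]`.
lemma tendsto_stableRatio_mul (hn : Tendsto n l atTop) :
    Tendsto (fun i ↦ stableRatio (k i) (n i) *
      (1 + Real.exp (-(stableRate * (k i / √(n i)))))) l (𝓝 1) := by
  refine (tendsto_iff_ultrafilter _ _ _).2 fun u hu ↦ ?_
  have hn_u : Tendsto n u atTop := hn.mono_left hu
  set t : ι → ℝ := fun i ↦ k i / √(n i)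
  obtain ⟨x, hx⟩ : ∃ x, Tendsto (fun i ↦ ENNReal.ofReal (t i)) u (𝓝 x) :=
    ⟨_, (u.map fun i ↦ ENNReal.ofReal (t i)).le_nhds_lim⟩
  rcases eq_or_ne x ∞ with rfl | hx_top
  · exact tendsto_stableRatio_mul_of_tendsto_atTop hn_u (tendsto_ofReal_nhds_top.1 hx)
  · refine tendsto_stableRatio_mul_of_tendsto_nhds (x := x.toReal) toReal_nonneg hn_u
      (((tendsto_toReal hx_top).comp hx).congr fun i ↦ ?_)
    exact toReal_ofReal (by positivity)

end StableRatio

section UniformAsymptotics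

open Filter Topology

lemma tendsto_bipartitePi_add_mul {ι : Type*} {l : Filter ι} {k n : ι → ℕ}
    (hn : Tendsto n l atTop) :
    Tendsto (fun i ↦ bipartitePi (n i + k i) (n i) *
      (1 + Real.exp (-(stableRate * (k i / √(n i))))) *
      ((n i : ℝ) ^ (3 / 2 : ℝ) * Real.exp (-(2 * stableRate * √(n i))))) l (𝓝 (5 / 48)) := by
  have hprod := (tendsto_stableRatio_mul (k := k) hn).mul
    (tendsto_stablePi_mul_rpow_mul_exp.comp hn)
  rw [one_mul] at hprod
  refine hprod.congr' ((hn.eventually eventually_stablePi_ne_zero).mono fun i hne ↦ ?_)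
  rw [Function.comp_apply, stableRatio]
  field_simp

lemma div_main_term_eq {c p d v : ℝ} (hc : c = 2 * stableRate) (hv : 0 < v) :
    p / (5 / (2 ^ 4 * 3) * Real.exp (c * √v) / v ^ ((3 : ℝ) / 2) /
      (1 + Real.exp (-(c * d) / (2 * √v)))) =
    p * (1 + Real.exp (-(stableRate * (d / √v)))) *
      (v ^ (3 / 2 : ℝ) * Real.exp (-(2 * stableRate * √v))) / (5 / 48) := by
  have hshift : -(c * d) / (2 * √v) = -(stableRate * (d / √v)) := by
    rw [hc]
    field_simp
  rw [hshift, hc, Real.exp_neg (2 * stableRate * √v)]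
  field_simp
  ring

lemma exists_forall_abs_bipartitePi_div_sub_one_lt {c : ℝ} (hc : c = 2 * stableRate) {ε : ℝ}
    (hε : 0 < ε) : ∃ N : ℕ, ∀ n ≥ N, 0 < n → ∀ k,
      |bipartitePi (n + k) n / (5 / (2 ^ 4 * 3) * Real.exp (c * √n) / (n : ℝ) ^ ((3 : ℝ) / 2) /
        (1 + Real.exp (-(c * k) / (2 * √n)))) - 1| < ε := by
  have hlim := (tendsto_bipartitePi_add_mul (k := Prod.fst)
    (tendsto_comap (f := (Prod.snd : ℕ × ℕ → ℕ)))).div_const (5 / 48)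
  rw [div_self (by norm_num)] at hlim
  have hlt := Metric.tendsto_nhds.1 hlim ε hε
  obtain ⟨N, hN⟩ := eventually_atTop.1 (eventually_comap.1 hlt)
  refine ⟨N, fun n hn hpos k ↦ ?_⟩
  rw [div_main_term_eq hc (mod_cast hpos)]
  exact hN n hn (k, n) rfl

end UniformAsymptotics

open Real in
/-- uniformly for positive integers `m, n`, as `μ = min(m,n) → ∞`,
`π(m,n) ~ (5/48) · e^{c√μ}/μ^{3/2} · (1 + e^{-c|n-m|/(2√μ)})⁻¹` where `c = 2π√(5/12)`. -/
theorem bipartitePi_asymptotic (c : ℝ) (hc : c = 2 * π * Real.sqrt (5 / 12)) :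
    ∀ ε > (0 : ℝ), ∃ N : ℕ, ∀ m n : ℕ, 0 < m → 0 < n → N ≤ min m n →
      |(bipartitePi m n : ℝ) /
          (5 / (2 ^ 4 * 3) * Real.exp (c * Real.sqrt (min m n)) /
              ((min m n : ℕ) : ℝ) ^ ((3 : ℝ) / 2) /
            (1 + Real.exp (-(c * |(n : ℝ) - (m : ℝ)|) /
                (2 * Real.sqrt (min m n))))) - 1| < ε := by
  intro ε hε
  have hrate : c = 2 * stableRate := by rw [hc, stableRate, mul_assoc]
  obtain ⟨N, hN⟩ := exists_forall_abs_bipartitePi_div_sub_one_lt hrate hε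
  refine ⟨N, fun m n hm hn hmin ↦ ?_⟩
  wlog hnm : n ≤ m generalizing m n
  · rw [bipartitePi_comm, abs_sub_comm (n : ℝ), min_comm (m : ℝ), min_comm m]
    exact this n m hn hm (by rwa [min_comm]) (not_le.1 hnm).le
  obtain ⟨k, rfl⟩ := Nat.exists_eq_add_of_le hnm
  have hgap : |(n : ℝ) - (n + k : ℕ)| = k := by simp
  rw [min_eq_right hnm] at hmin
  rw [hgap, ← Nat.cast_min, min_eq_right hnm]
  exact hN n hmin hn k
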